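/- For every multivariate polynomial P ∈ ℤ[x₀, x₁, …, x_ν] there exists a polynomial Q̃ ∈ ℤ[x₀, x₁, …, x₁₁] in eleven unknowns such that for every a ∈ ℕ: there exist z₁, …, z_ν ∈ ℤ with P(a, z₁, …, z_ν) = 0 if and only if there exist z̃₁, …, z̃₁₁ ∈ ℤ with Q̃(a, z̃₁, …, z̃₁₁) = 0. -/

import Mathlib

/-!
# Eleven integer unknowns suffice

The proof combines the coding method of Matiyasevich and Robinson with the passage to integer unknowns due to
Sun. Every integer unknown is first written as a difference of two natural numbers, so that only
solvability of `P (a, z) = 0` in natural numbers `z i` has to be treated.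

*Coding.* Choose a power of two `β` larger than `a` and all `z i`, and code the tuple `z` in a single number
`g` as digits at fixed positions `(δ + 1) ^ (i + 1)` in a base `2 h`, where `h` is a large power of two depending
on `β`. By the multinomial theorem, `δ! P (a, z)` is one coefficient of a fixed polynomial multiplied by a
power of `1 + a X + ∑ z i X ^ ((δ + 1) ^ (i + 1))` (`alg_coding`), hence, after a shift, one digit of a number `K` which
is a polynomial in `a`, `h`, `g`. That `g` is a code, and that this digit has the value meaning `P (a, z) = 0`,
both say that certain numbers have no binary digit in common with explicit masks (`mask_coding`, `codeK_mask`).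
Together this is one condition `S &&& T = 0`, and by Kummer's theorem it is equivalent to one divisibility
`N² ∣ (2 * X).choose X` with `X` and `N` polynomials in `a`, `β`, `g` (`mask_iff`, `coding`).

*Pell equations.* The quotient of the `(2 X + 1)`-st Pell number of base `a` by the `(X + 1)`-st of base `c` is, for
suitable `a` and `c`, close to `(V + 1) ^ (2 X) / V ^ X`, whose integral part is congruent to the central
binomial coefficient modulo `V`. So divisibility by `Y` means that this quotient is within `1/4` of a
multiple `l Y`. The first Pell number is defined by the Matiyasevich–Robinson system, whose
three squares have pairwise coprime values and thus form one square (`pell_backward`); for the second one a single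
square and a congruence suffice, because the inequality bounds its size. One more divisibility by `4 a - 5`
gives `q = 2 ^ (2 X + 1)`. These are the statements `bridge_backward` and `bridge_forward`.

*Combination.* There remain two squares, one divisibility and one inequality. The inequality is
absorbed into the second square at the cost of two unknowns `u`, `v` (`nonneg_and_sq_iff`), and relation combining
turns two squares and a divisibility into one equation at the cost of one unknown `n` (`relation_combining`).
The bounds on `g` and the conditions `l ≠ 0`, `x ≠ 0` are factors in the inequality. Finally `β = b²` with
`b = (2 a + 3) (2 f + 1) + 1`, and `q = b w` forces `b` to be a power of two up to sign. The unknowns are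
`f, g, h, k, l, w, x, y, u, v, n`.
-/

/-! ### Squares, nonnegativity and divisibility in one equation -/

theorem exists_sq_of_mul_sq {A z s : ℤ} (hz : z ≠ 0) (h : A * z ^ 2 = s ^ 2) : ∃ r, A = r ^ 2 := by
  have hd : z ∣ s := by
    rw [← Int.pow_dvd_pow_iff (two_ne_zero)]
    exact ⟨A, by rw [← h]; ring⟩
  obtain ⟨r, rfl⟩ := hd
  refine ⟨r, ?_⟩
  have : z ^ 2 ≠ 0 := pow_ne_zero 2 hz
  apply mul_right_cancel₀ this
  rw [h]; ring

/-- Matiyasevich–Robinson relation combining for two squares and one divisibility. With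
`Z = S n + T` and `W = 1 + A² + B²` the expression is the product of the four numbers
`Z ± S√A ± S W √B`. If it vanishes, then `A B` is a square and `z = Z / S` is an integer such that
`A z²` and `B z²` are squares. The weight `W` is so large that `z = 0` forces `A = B = 0`. -/
theorem relation_combining {A B S T : ℤ} (hS : S ≠ 0) :
    ((∃ r, A = r ^ 2) ∧ (∃ r, B = r ^ 2) ∧ S ∣ T) ↔
    ∃ n : ℤ, ((S * n + T) ^ 2 - S ^ 2 * (A + (1 + A ^ 2 + B ^ 2) ^ 2 * B)) ^ 2 -
      4 * S ^ 4 * (1 + A ^ 2 + B ^ 2) ^ 2 * (A * B) = 0 := by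
  constructor
  · rintro ⟨⟨r, hr⟩, ⟨s, hs⟩, ⟨t, ht⟩⟩
    refine ⟨r + (1 + A ^ 2 + B ^ 2) * s - t, ?_⟩
    generalize 1 + A ^ 2 + B ^ 2 = W
    subst hr hs ht
    ring
  · rintro ⟨n, hn⟩
    set W := 1 + A ^ 2 + B ^ 2 with hW
    have hWpos : 0 < W := by positivity
    set Z := S * n + T with hZ
    have hSW : 2 * S ^ 2 * W ≠ 0 := by positivity
    obtain ⟨m, hm⟩ : ∃ m, A * B = m ^ 2 := by
      apply exists_sq_of_mul_sq (s := Z ^ 2 - S ^ 2 * (A + W ^ 2 * B)) hSW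
      linarith
    have h1 : (Z ^ 2 - S ^ 2 * (A + W ^ 2 * B)) ^ 2 = (2 * S ^ 2 * W * m) ^ 2 := by
      rw [hm] at hn; linarith
    obtain ⟨m, hm, h2⟩ : ∃ m, A * B = m ^ 2 ∧ Z ^ 2 = S ^ 2 * (A + W ^ 2 * B + 2 * W * m) := by
      rcases sq_eq_sq_iff_eq_or_eq_neg.mp h1 with h | h
      · exact ⟨m, hm, by linarith⟩
      · exact ⟨-m, by rw [hm]; ring, by linarith⟩
    have hSZ : S ∣ Z := by
      rw [← Int.pow_dvd_pow_iff (two_ne_zero)]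
      exact ⟨_, h2⟩
    have hST : S ∣ T := by
      have := dvd_sub hSZ (Dvd.intro n rfl : S ∣ S * n)
      simpa [hZ] using this
    obtain ⟨z, hz⟩ := hSZ
    have h3 : z ^ 2 = A + W ^ 2 * B + 2 * W * m := by
      have : S ^ 2 ≠ 0 := pow_ne_zero 2 hS
      apply mul_left_cancel₀ this
      rw [← h2, hz]; ring
    have hA : A * z ^ 2 = (A + W * m) ^ 2 := by
      rw [h3]; linear_combination W ^ 2 * hm
    have hB : B * z ^ 2 = (m + W * B) ^ 2 := by
      rw [h3]; linear_combination hm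
    -- the degenerate case: `A = -W m` and `m = -W B`, with `W` larger than `|A|`
    by_cases hz0 : z = 0
    · subst hz0
      have e1 : A + W * m = 0 := by
        have := hA.symm; simpa using this
      have e2 : m + W * B = 0 := by
        have := hB.symm; simpa using this
      have hA0 : A = 0 := by
        apply Int.eq_zero_of_abs_lt_dvd (m := W) ⟨-m, by linarith⟩
        rw [abs_lt]; constructor <;> nlinarith [sq_nonneg A, sq_nonneg B]
      have hm0 : m = 0 := by
        rw [hA0] at hm
        have := hm.symm; simpa using this
      have hB0 : B = 0 := by
        rw [hm0] at e2
        rcases mul_eq_zero.mp (by linarith : W * B = 0) with h | h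
        · omega
        · exact h
      exact ⟨⟨0, by simp [hA0]⟩, ⟨0, by simp [hB0]⟩, hST⟩
    · exact ⟨exists_sq_of_mul_sq hz0 hA, exists_sq_of_mul_sq hz0 hB, hST⟩

theorem exists_sq_of_mul_of_coprime {A B : ℤ} (hA : 0 < A) (hc : IsCoprime A B)
    (h : ∃ r, A * B = r ^ 2) : (∃ r, A = r ^ 2) ∧ ∃ r, B = r ^ 2 := by
  obtain ⟨r, hr⟩ := h
  have h0 : ∃ r, A = r ^ 2 := by
    obtain ⟨s, hs⟩ := Int.sq_of_gcd_eq_one (Int.isCoprime_iff_gcd_eq_one.mp hc) hr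
    rcases hs with hs | hs
    · exact ⟨s, hs⟩
    · nlinarith [sq_nonneg s]
  refine ⟨h0, ?_⟩
  obtain ⟨s, rfl⟩ := h0
  refine exists_sq_of_mul_sq (z := s) (s := r) ?_ (by rw [← hr]; ring)
  rintro rfl; simp at hA

/-- Every nonzero integer has the form `(2 u + 1) (3 v + 1)`: up to sign the factor `3 v + 1` is the
2-part, because `2 ^ k` or `-2 ^ k` is `1` modulo `3`. -/
theorem exists_eq_odd_mul {t : ℤ} (ht : t ≠ 0) : ∃ u v : ℤ, t = (2 * u + 1) * (3 * v + 1) := by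
  obtain ⟨k, m, hm, hk⟩ : ∃ (k : ℕ) (m : ℤ), Odd m ∧ t = 2 ^ k * m := by
    obtain ⟨k, m, hm, h⟩ := Nat.exists_eq_two_pow_mul_odd (n := t.natAbs) (by omega)
    rcases Int.natAbs_eq t with h' | h'
    · exact ⟨k, m, by exact_mod_cast hm, by rw [h', h]; push_cast; ring⟩
    · exact ⟨k, -m, by simpa using hm, by rw [h', h]; push_cast; ring⟩
  obtain ⟨v, hv⟩ : ∃ v : ℤ, (2:ℤ) ^ k = 3 * v + 1 ∨ -(2:ℤ) ^ k = 3 * v + 1 := by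
    clear hk
    induction k with
    | zero => exact ⟨0, by simp⟩
    | succ k ih =>
      obtain ⟨v, h | h⟩ := ih
      · exact ⟨-2 * v - 1, Or.inr (by rw [pow_succ]; linarith)⟩
      · exact ⟨-2 * v - 1, Or.inl (by rw [pow_succ]; linarith)⟩
  obtain ⟨u, rfl⟩ := hm
  rcases hv with hv | hv
  · exact ⟨u, v, by rw [hk, hv]; ring⟩
  · exact ⟨-u - 1, v, by rw [hk, ← hv]; ring⟩

/-- The conditions that `m` is nonnegative and that `A` is a square, expressed by one square. The
number `(4 m + 2) A²` is never a square (its cofactor is `2` modulo `4`), hence for `m ≥ 0` the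
Pell equation `x² = (4 m + 2) (A t)² + 1` has a solution with `t ≠ 0`, while for `m < 0` it has
none; `t ≠ 0` is written as `(2 u + 1) (3 v + 1)`. The factor `A` inside the Pell equation makes the
two factors of the left side coprime. -/
theorem nonneg_and_sq_iff {m A : ℤ} (hA : 0 < A) :
    (0 ≤ m ∧ ∃ r, A = r ^ 2) ↔ ∃ u v : ℤ, ∃ r,
      A * ((4 * m + 2) * (A * ((2 * u + 1) * (3 * v + 1))) ^ 2 + 1) = r ^ 2 := by
  constructor
  · rintro ⟨hm, r, hr⟩
    have hns : ¬ IsSquare ((4 * m + 2) * A ^ 2) := by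
      rintro ⟨s, hs⟩
      obtain ⟨p, hp⟩ := exists_sq_of_mul_sq (A := 4 * m + 2) (z := A) (s := s) hA.ne' (by rw [hs]; ring)
      rcases Int.even_or_odd' p with ⟨i, rfl | rfl⟩
      · ring_nf at hp; omega
      · ring_nf at hp; omega
    obtain ⟨x, t, hx, ht⟩ := Pell.exists_of_not_isSquare (by positivity) hns
    obtain ⟨u, v, rfl⟩ := exists_eq_odd_mul ht
    refine ⟨u, v, r * x, ?_⟩
    rw [mul_pow r, ← hr]
    congr 1
    linarith
  · rintro ⟨u, v, h⟩
    obtain ⟨h1, r, h2⟩ := exists_sq_of_mul_of_coprime hA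
      ⟨-((4 * m + 2) * A * ((2 * u + 1) * (3 * v + 1)) ^ 2), 1, by ring⟩ h
    refine ⟨?_, h1⟩
    by_contra! hm
    have ht : (A * ((2 * u + 1) * (3 * v + 1))) ≠ 0 := by
      apply mul_ne_zero hA.ne' (mul_ne_zero _ _) <;> omega
    have := pow_pos (abs_pos.mpr ht) 2
    rw [sq_abs] at this
    nlinarith [sq_nonneg r]

/-! ### Pell sequences through three squares -/

section
open Pell

theorem pell_eq_int {a : ℕ} (a1 : 1 < a) (n : ℕ) :
    ((a : ℤ) ^ 2 - 1) * (yn a1 n : ℤ) ^ 2 + 1 = (xn a1 n : ℤ) ^ 2 := by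
  have h := pell_eqz a1 n
  have hd := dz_val a1
  simp only [xz, yz, az] at h hd
  rw [hd] at h
  linarith

/-- Up to sign, the solutions of the Pell equation for `a² - 1` are the numbers `yn a1 n`. -/
theorem natAbs_eq_yn {a : ℕ} (a1 : 1 < a) {Y : ℤ} (h : ∃ r, ((a : ℤ) ^ 2 - 1) * Y ^ 2 + 1 = r ^ 2) :
    ∃ n, Y.natAbs = yn a1 n := by
  obtain ⟨r, hr⟩ := h
  have hd := dz_val a1
  simp only [az] at hd
  change ((a * a - 1 : ℕ) : ℤ) = _ at hd
  have : r.natAbs * r.natAbs - (a * a - 1) * Y.natAbs * Y.natAbs = 1 := by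
    have : r.natAbs * r.natAbs = (a * a - 1) * Y.natAbs * Y.natAbs + 1 := by
      zify
      rw [hd, mul_assoc, abs_mul_abs_self, abs_mul_abs_self]
      linarith
    omega
  obtain ⟨n, _, h⟩ := eq_pell a1 this
  exact ⟨n, h⟩

theorem xn_two_mul {a : ℕ} (a1 : 1 < a) (n : ℕ) :
    (xn a1 (2 * n) : ℤ) = 2 * (((a : ℤ) ^ 2 - 1) * (yn a1 n : ℤ) ^ 2) + 1 := by
  have h := xn_add a1 n n
  have hd := dz_val a1
  have h2 := pell_eq_int a1 n
  simp only [az] at hd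
  rw [two_mul, h]
  push_cast
  rw [hd]
  linarith

theorem yn_two_mul {a : ℕ} (a1 : 1 < a) (n : ℕ) :
    yn a1 (2 * n) = 2 * xn a1 n * yn a1 n := by
  rw [two_mul, yn_add]; ring

theorem yn_sub_dvd {a : ℕ} (a1 : 1 < a) (n : ℕ) : ((a : ℤ) - 1) ∣ (yn a1 n : ℤ) - n := by
  have h := (Nat.modEq_iff_dvd.mp (yn_modEq_a_sub_one a1 n).symm)
  rwa [Nat.cast_sub a1.le, Nat.cast_one] at h

/-- Transitivity of congruence up to sign modulo `M`. -/
theorem dvd_of_eq_or_neg {M u v w : ℤ} (h1 : M ∣ u - v ∨ M ∣ u + v) (h2 : M ∣ v - w ∨ M ∣ v + w) :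
    M ∣ u - w ∨ M ∣ u + w := by
  rcases h1 with ⟨p, hp⟩ | ⟨p, hp⟩ <;> rcases h2 with ⟨q, hq⟩ | ⟨q, hq⟩
  · exact Or.inl ⟨p + q, by linarith⟩
  · exact Or.inr ⟨p + q, by linarith⟩
  · exact Or.inr ⟨p - q, by linarith⟩
  · exact Or.inl ⟨p - q, by linarith⟩

section
variable (a B h x y : ℤ)
/-- A number congruent to `B` modulo `a - 1`; the candidate for the `B`-th Pell number of base `a`. -/
def pC : ℤ := B + (a - 1) * h
/-- A square exactly when `pC` is, up to sign, a Pell number of base `a`. -/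
def pD : ℤ := (a ^ 2 - 1) * pC a B h ^ 2 + 1
/-- A multiple of `2 C² D`; the divisibility by `C²` is what later forces `C` to divide its index. -/
def pE : ℤ := 2 * pC a B h ^ 2 * pD a B h * x
/-- A square exactly when `pE` is, up to sign, a Pell number of base `a`. -/
def pF : ℤ := (a ^ 2 - 1) * pE a B h x ^ 2 + 1
/-- An auxiliary base, congruent to `a` modulo `F` and to `1` modulo `2 C`. -/
def pG : ℤ := a + pF a B h x * (1 - a + a * pE a B h x ^ 2)
/-- A number congruent to `C` modulo `F` and to `B` modulo `2 C`. -/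
def pH : ℤ := pC a B h + pF a B h x * (B - pC a B h + 2 * pC a B h * y)
/-- A square exactly when `pH` is, up to sign, a Pell number of base `G`. -/
def pI : ℤ := (pG a B h x ^ 2 - 1) * pH a B h x y ^ 2 + 1
end

theorem coprimeFD (a B h x : ℤ) : IsCoprime (pD a B h) (pF a B h x) := by
  refine ⟨-((a ^ 2 - 1) * pE a B h x * (2 * pC a B h ^ 2 * x)), 1, ?_⟩
  unfold pF
  have hE : pE a B h x = pD a B h * (2 * pC a B h ^ 2 * x) := by rw [pE]; ring
  linear_combination (a ^ 2 - 1) * pE a B h x * hE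

theorem coprimeDI (a B h x y : ℤ) : IsCoprime (pD a B h) (pI a B h x y) := by
  have h1 : pD a B h ∣ pG a B h x - 1 := by
    have : pG a B h x - 1 = pE a B h x ^ 2 *
      (a + (a ^ 2 - 1) * (1 - a + a * pE a B h x ^ 2)) := by
      rw [pG, pF]; ring
    rw [this]
    exact Dvd.dvd.mul_right (dvd_pow ⟨2 * pC a B h ^ 2 * x, by rw [pE]; ring⟩ two_ne_zero) _
  obtain ⟨t, ht⟩ := h1
  refine ⟨-(t * (pG a B h x + 1) * pH a B h x y ^ 2), 1, ?_⟩
  rw [pI]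
  linear_combination (pG a B h x + 1) * pH a B h x y ^ 2 * ht

theorem coprimeFI (a B h x y : ℤ) : IsCoprime (pF a B h x) (pI a B h x y) := by
  have h1 : pF a B h x ∣ pI a B h x y - pD a B h := by
    have hG : pF a B h x ∣ pG a B h x - a := ⟨1 - a + a * pE a B h x ^ 2, by rw [pG]; ring⟩
    have hH : pF a B h x ∣ pH a B h x y - pC a B h := ⟨B - pC a B h + 2 * pC a B h * y, by rw [pH]; ring⟩
    obtain ⟨s, hs⟩ := hG
    obtain ⟨t, ht⟩ := hH
    refine ⟨s * (pG a B h x + a) * pH a B h x y ^ 2 +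
      (a ^ 2 - 1) * t * (pH a B h x y + pC a B h), ?_⟩
    rw [pI, pD]
    linear_combination (pG a B h x + a) * pH a B h x y ^ 2 * hs +
      (a ^ 2 - 1) * (pH a B h x y + pC a B h) * ht
  obtain ⟨t, ht⟩ := h1
  have h2 := (coprimeFD a B h x).symm
  rw [show pI a B h x y = pD a B h + pF a B h x * t by linarith]
  exact h2.add_mul_left_right t

theorem pD_pos {a : ℤ} (ha : 1 < a) (B h : ℤ) : 0 < pD a B h := by
  have : 0 ≤ a ^ 2 - 1 := by nlinarith
  unfold pD; positivity

theorem pF_pos {a : ℤ} (ha : 1 < a) (B h x : ℤ) : 0 < pF a B h x := by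
  have : 0 ≤ a ^ 2 - 1 := by nlinarith
  unfold pF; positivity

/-- The `B`-th Pell number of base `a` solves the system: `x` comes from a Pell equation making `F` a
square, and `y` from the Chinese remainder theorem applied to the `B`-th Pell number of base `G`. -/
theorem pell_forward {a : ℕ} (a1 : 1 < a) {B : ℕ} (hB : 0 < B) :
    ∃ h x y : ℤ, x ≠ 0 ∧ pC a B h = yn a1 B ∧
      ∃ r, pD a B h * pF a B h x * pI a B h x y = r ^ 2 := by
  obtain ⟨h, hh⟩ := yn_sub_dvd a1 B
  have hC : pC a B h = yn a1 B := by rw [pC]; linarith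
  have hy0 : 0 < yn a1 B := by
    have := strictMono_y a1 hB; simpa using this
  have hCpos : 0 < pC a B h := by rw [hC]; exact_mod_cast hy0
  have ha : (1 : ℤ) < a := by exact_mod_cast a1
  have hDpos := pD_pos ha B h
  have hD : pD a B h = (xn a1 B : ℤ) ^ 2 := by
    rw [pD, hC]; exact pell_eq_int a1 B
  have hd : ¬ IsSquare (((a : ℤ) ^ 2 - 1) * (2 * pC a B h ^ 2 * pD a B h) ^ 2) := by
    rintro ⟨s, hs⟩
    obtain ⟨p, hp⟩ := exists_sq_of_mul_sq (A := (a : ℤ) ^ 2 - 1)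
      (z := 2 * pC a B h ^ 2 * pD a B h) (s := s) (by positivity) (by rw [hs]; ring)
    have hp' : (a : ℤ) ^ 2 - 1 = |p| ^ 2 := by rw [hp, sq_abs]
    have := abs_nonneg p
    generalize |p| = p' at *
    have h1 : p' < a := by nlinarith
    nlinarith
  -- `F = (a² - 1) (2 C² D x)² + 1` is a square for a suitable `x ≠ 0`
  obtain ⟨r, x, hr, hx⟩ := Pell.exists_of_not_isSquare (by
    have : (0 : ℤ) < (a : ℤ) ^ 2 - 1 := by nlinarith
    positivity) hd
  have hF : pF a B h x = r ^ 2 := by rw [pF, pE]; linarith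
  have hE1 : 1 ≤ pE a B h x ^ 2 := by
    have : pE a B h x ≠ 0 := by rw [pE]; positivity
    have : 0 < pE a B h x ^ 2 := by positivity
    omega
  have hFpos := pF_pos ha B h x
  have hG1 : 1 < pG a B h x := by
    rw [pG]
    have : 1 ≤ (1 - a + a * pE a B h x ^ 2) := by nlinarith
    nlinarith
  obtain ⟨g, hg⟩ : ∃ g : ℕ, (g : ℤ) = pG a B h x := ⟨(pG a B h x).toNat, by omega⟩
  have g1 : 1 < g := by zify; rw [hg]; exact hG1
  -- the remaining square is obtained from the `B`-th solution for `G`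
  have hF1 : pF a B h x ∣ (yn g1 B : ℤ) - pC a B h := by
    have hmod : a ≡ g [MOD (pF a B h x).toNat] := by
      rw [Nat.modEq_iff_dvd, hg, Int.toNat_of_nonneg hFpos.le]
      exact ⟨1 - a + a * pE a B h x ^ 2, by rw [pG]; ring⟩
    have h2 := (xy_modEq_of_modEq a1 g1 hmod B).2
    rw [Nat.modEq_iff_dvd, Int.toNat_of_nonneg hFpos.le] at h2
    rwa [hC]
  have hC1 : 2 * pC a B h ∣ (yn g1 B : ℤ) - B := by
    refine dvd_trans ?_ (yn_sub_dvd g1 B)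
    rw [hg]
    have : pG a B h x - 1 = pE a B h x ^ 2 *
      (a + ((a:ℤ) ^ 2 - 1) * (1 - a + a * pE a B h x ^ 2)) := by
      rw [pG, pF]; ring
    rw [this, sq, mul_assoc]
    refine Dvd.dvd.mul_right ⟨pC a B h * pD a B h * x, by rw [pE]; ring⟩ _
  have hcop : IsCoprime (pF a B h x) (2 * pC a B h) := by
    refine ⟨1, -((a ^ 2 - 1) * (pE a B h x * (pC a B h * pD a B h * x))), ?_⟩
    rw [pF]; nth_rewrite 1 [pE]; rw [pE]; ring
  -- both residues of `H` agree with those of the `B`-th Pell number of base `G`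
  have hall : pF a B h x * (2 * pC a B h) ∣
      (yn g1 B : ℤ) - (pC a B h + pF a B h x * (B - pC a B h)) := by
    apply hcop.mul_dvd
    · have := hF1.sub (Dvd.intro (B - pC a B h) rfl : pF a B h x ∣ _)
      convert this using 1; ring
    · have h3 : (yn g1 B : ℤ) - (pC a B h + pF a B h x * (B - pC a B h)) =
        ((yn g1 B : ℤ) - B) - (pF a B h x - 1) * (B - pC a B h) := by ring
      rw [h3]
      refine hC1.sub (Dvd.dvd.mul_right ?_ _)
      refine ⟨(a ^ 2 - 1) * (pE a B h x * (pC a B h * pD a B h * x)), ?_⟩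
      rw [pF]; nth_rewrite 1 [pE]; rw [pE]; ring
  obtain ⟨y, hy⟩ := hall
  have hH : pH a B h x y = yn g1 B := by rw [pH]; linarith
  have hI : pI a B h x y = (xn g1 B : ℤ) ^ 2 := by
    rw [pI, hH, ← hg]; exact pell_eq_int g1 B
  exact ⟨h, x, y, hx, hC, xn a1 B * r * xn g1 B, by rw [hD, hF, hI]; ring⟩

/-- A Diophantine definition of the Pell numbers by a single square. As `D`, `F`, `I` are pairwise
coprime, all three are squares, so `C`, `E`, `H` are up to sign Pell numbers with indices `k`, `n`
(base `a`) and `m` (base `G`). Then `k ≡ ±m` modulo `2 n`, `m ≡ ±B` modulo `2 C`, and `C ∣ n`, whence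
`k ≡ ±B` modulo `2 C`; the sizes of `k` and `B` give `k = B`. All congruences are up to sign since the
unknowns are integers; a negative `C` is excluded modulo `a - 1`. -/
theorem pell_backward {a : ℕ} (a1 : 1 < a) {B : ℕ} (hB : 0 < B) (hBa : 2 * B + 1 < a)
    {h x y : ℤ} (hx : x ≠ 0)
    (hsq : ∃ r, pD a B h * pF a B h x * pI a B h x y = r ^ 2) : pC a B h = yn a1 B := by
  have ha : (1 : ℤ) < a := by exact_mod_cast a1
  have hDpos := pD_pos ha B h
  have hFpos := pF_pos ha B h x
  have hBC : (B : ℤ) ≤ |pC a B h| := by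
    rw [pC]
    rcases lt_trichotomy h 0 with hh | hh | hh
    · rw [le_abs]; right; nlinarith
    · subst hh; simp
    · rw [le_abs]; left; nlinarith
  have hC0 : pC a B h ≠ 0 := by
    intro h0; rw [h0] at hBC; simp at hBC; omega
  have hE0 : pE a B h x ≠ 0 := by rw [pE]; positivity
  rw [mul_assoc] at hsq
  obtain ⟨hD, hsq⟩ := exists_sq_of_mul_of_coprime hDpos
    ((coprimeFD a B h x).mul_right (coprimeDI a B h x y)) hsq
  obtain ⟨hF, hI⟩ := exists_sq_of_mul_of_coprime hFpos (coprimeFI a B h x y) hsq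
  have hE1 : 1 ≤ pE a B h x ^ 2 := by
    have : 0 < pE a B h x ^ 2 := by positivity
    omega
  have hG1 : 1 < pG a B h x := by
    rw [pG]
    have : 1 ≤ (1 - a + a * pE a B h x ^ 2) := by nlinarith
    nlinarith
  obtain ⟨g, hg⟩ : ∃ g : ℕ, (g : ℤ) = pG a B h x := ⟨(pG a B h x).toNat, by omega⟩
  have g1 : 1 < g := by zify; rw [hg]; exact hG1
  obtain ⟨k, hk⟩ := natAbs_eq_yn a1 hD
  obtain ⟨n, hn⟩ := natAbs_eq_yn a1 hF
  obtain ⟨m, hm⟩ := natAbs_eq_yn g1 (by rw [hg]; exact hI)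
  have hk2 : (yn a1 k : ℤ) ^ 2 = pC a B h ^ 2 := by rw [← hk]; simp
  have hn2 : (yn a1 n : ℤ) ^ 2 = pE a B h x ^ 2 := by rw [← hn]; simp
  have hm2 : (yn g1 m : ℤ) ^ 2 = pH a B h x y ^ 2 := by rw [← hm]; simp
  have hDk : pD a B h = (xn a1 k : ℤ) ^ 2 := by rw [pD, ← hk2, pell_eq_int]
  have hFn : pF a B h x = (xn a1 n : ℤ) ^ 2 := by rw [pF, ← hn2, pell_eq_int]
  have hkpos : 0 < k := by
    rcases Nat.eq_zero_or_pos k with rfl | h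
    · simp at hk; exact absurd hk hC0
    · exact h
  -- `C` divides `n`
  have hCn : yn a1 k ∣ n := by
    apply dvd_of_ysq_dvd
    rw [← hk, ← hn, ← Int.natAbs_mul, Int.natAbs_dvd_natAbs]
    exact ⟨2 * pD a B h * x, by rw [pE]; ring⟩
  -- needed for uniqueness of indices modulo `2 n`; this is why `E` has the factor `D`
  have h2kn : 2 * k ≤ n := by
    rw [← (strictMono_y a1).le_iff_le, yn_two_mul, ← hn, pE, Int.natAbs_mul, Int.natAbs_mul,
      Int.natAbs_mul, Int.natAbs_pow, hk, hDk, Int.natAbs_pow]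
    simp only [Int.natAbs_natCast]
    rw [show (2 : ℤ).natAbs = 2 from rfl]
    have h1 : 1 ≤ x.natAbs := by omega
    have h2 : 1 ≤ yn a1 k := by
      have := strictMono_y a1 hkpos; simp at this; omega
    have h3 := x_pos a1 k
    calc 2 * xn a1 k * yn a1 k = 2 * (yn a1 k * 1) * (xn a1 k * 1) * 1 := by ring
      _ ≤ 2 * (yn a1 k * yn a1 k) * (xn a1 k * xn a1 k) * x.natAbs := by gcongr; omega
      _ = _ := by ring
  -- indices modulo `2 n`
  have hmod : (2 * n : ℤ) ∣ k - m ∨ (2 * n : ℤ) ∣ k + m := by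
    have hga : a ≡ g [MOD xn a1 n] := by
      rw [Nat.modEq_iff_dvd, hg]
      exact ⟨xn a1 n * (1 - a + a * pE a B h x ^ 2), by rw [pG, hFn]; ring⟩
    obtain ⟨t, ht⟩ := Nat.modEq_iff_dvd.mp (xy_modEq_of_modEq a1 g1 hga m).2
    have h1 : xn a1 (2 * m) ≡ xn a1 (2 * k) [MOD xn a1 n] := by
      rw [Nat.modEq_iff_dvd, xn_two_mul, xn_two_mul]
      refine ⟨2 * (((a : ℤ) ^ 2 - 1)) * (t * (yn g1 m + yn a1 m) +
        -(xn a1 n * (B - pC a B h + 2 * pC a B h * y)) * (pH a B h x y + pC a B h)), ?_⟩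
      have hH : pH a B h x y - pC a B h =
          (xn a1 n : ℤ) ^ 2 * (B - pC a B h + 2 * pC a B h * y) := by rw [pH, hFn]; ring
      rw [hk2]
      linear_combination 2 * (((a : ℤ) ^ 2 - 1)) * ((yn g1 m + yn a1 m) * ht -
        (pH a B h x y + pC a B h) * hH - hm2)
    rcases modEq_of_xn_modEq a1 (by omega) h2kn h1 with h | h
    · rw [Nat.modEq_iff_dvd] at h
      obtain ⟨t, ht⟩ := h
      push_cast at ht
      exact Or.inl ⟨t, by linarith⟩
    · obtain ⟨t, ht⟩ := Nat.modEq_zero_iff_dvd.mp h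
      zify at ht
      exact Or.inr ⟨t, by linarith⟩
  have hCn' : pC a B h ∣ n := by rw [← Int.natAbs_dvd, hk]; exact_mod_cast hCn
  have hCn2 : 2 * pC a B h ∣ 2 * n := mul_dvd_mul_left 2 hCn'
  have hkm : 2 * pC a B h ∣ k - m ∨ 2 * pC a B h ∣ k + m :=
    hmod.imp hCn2.trans hCn2.trans
  have hmB : 2 * pC a B h ∣ m - B ∨ 2 * pC a B h ∣ m + B := by
    have h1 : 2 * pC a B h ∣ (yn g1 m : ℤ) - m := by
      refine dvd_trans ?_ (yn_sub_dvd g1 m)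
      rw [hg]
      have : pG a B h x - 1 = pE a B h x ^ 2 *
        (a + ((a:ℤ) ^ 2 - 1) * (1 - a + a * pE a B h x ^ 2)) := by
        rw [pG, pF]; ring
      rw [this, sq, mul_assoc]
      refine Dvd.dvd.mul_right ⟨pC a B h * pD a B h * x, by rw [pE]; ring⟩ _
    have h2 : 2 * pC a B h ∣ pH a B h x y - B := by
      have : pH a B h x y - B = (pF a B h x - 1) * (B - pC a B h) +
        2 * pC a B h * (pF a B h x * y) := by rw [pH]; ring
      rw [this]
      refine dvd_add (Dvd.dvd.mul_right ?_ _) (Dvd.intro _ rfl)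
      refine ⟨(a ^ 2 - 1) * (pE a B h x * (pC a B h * pD a B h * x)), ?_⟩
      rw [pF]; nth_rewrite 1 [pE]; rw [pE]; ring
    rcases Int.natAbs_eq (pH a B h x y) with h3 | h3
    · rw [hm] at h3
      left
      rw [h3] at h2
      obtain ⟨t, ht⟩ := h2.sub h1
      exact ⟨t, by linarith⟩
    · rw [hm] at h3
      right
      rw [h3] at h2
      obtain ⟨t, ht⟩ := h2.add h1
      exact ⟨-t, by linarith⟩
  -- both `k` and `B` are at most `|C|`
  have hkB := dvd_of_eq_or_neg hkm hmB
  have hkC : (k : ℤ) ≤ |pC a B h| := by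
    rw [Int.abs_eq_natAbs, hk]; exact_mod_cast yn_ge_n a1 k
  have hkB' : k = B := by
    have hCpos : 0 < |pC a B h| := abs_pos.mpr hC0
    have e : |2 * pC a B h| = 2 * |pC a B h| := by rw [abs_mul]; rfl
    rcases hkB with h | h
    · have := Int.eq_zero_of_abs_lt_dvd ((abs_dvd _ _).mpr h) (by
        rw [e, abs_lt]; constructor <;> omega)
      omega
    · have h' := (abs_dvd _ _).mpr h
      rw [e] at h'
      have := Int.le_of_dvd (by omega) h'
      omega
  subst hkB'
  rcases Int.natAbs_eq (pC a k h) with h3 | h3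
  · rw [hk] at h3; exact h3
  · exfalso
    rw [hk] at h3
    have h1 := yn_sub_dvd a1 k
    have h2 : ((a:ℤ) - 1) ∣ pC a k h - k := ⟨h, by rw [pC]; ring⟩
    rw [h3] at h2
    have h4 := h1.add h2
    have h5 : ((a:ℤ) - 1) ∣ 2 * k := by
      obtain ⟨t, ht⟩ := h4
      exact ⟨-t, by linarith⟩
    have := Int.le_of_dvd (by omega) h5
    omega

end

/-! ### Powers of two and binomial coefficients from Pell sequences -/

section
open Pell

/-- Modulo `4 a - 5` the number `2 a` is `2 + 1/2`, so the `n`-th Pell number is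
`(2 ^ n - 2 ^ (-n)) / (2 - 1/2)`. -/
theorem yn_two_pow_dvd {a : ℕ} (a1 : 1 < a) (n : ℕ) :
    (4 * (a : ℤ) - 5) ∣ 3 * 2 ^ n * yn a1 n - 2 * ((2 ^ n) ^ 2 - 1) := by
  induction n using Nat.twoStepInduction with
  | zero => simp
  | one => exact ⟨0, by norm_num⟩
  | more n ih1 ih2 =>
    obtain ⟨s, hs⟩ := ih1
    obtain ⟨t, ht⟩ := ih2
    have h := yn_succ_succ a1 n
    zify at h
    have h' : (yn a1 (n + 2) : ℤ) = 2 * a * yn a1 (n + 1) - yn a1 n := by linarith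
    refine ⟨3 * 2 ^ (n + 1) * yn a1 (n + 1) + 5 * t - 4 * s, ?_⟩
    rw [h']
    linear_combination 5 * ht - 4 * hs

/-- The congruence of `yn_two_pow_dvd` characterises `2 ^ n` among the integers `q` that are small
compared with `a`. Two solutions `q` and `t = 2 ^ n` satisfy `(t - q) (q t + 1) = 0` modulo
`4 a - 5`, and the size condition turns this into an equality. -/
theorem eq_two_pow {a : ℕ} (a1 : 1 < a) {n : ℕ} (hn : 0 < n) {q : ℤ}
    (h : (4 * (a : ℤ) - 5) ∣ 3 * q * yn a1 n - 2 * (q ^ 2 - 1))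
    (hs : 4 * (2 ^ n) ^ 2 * (q ^ 2 + 1) < 4 * (a : ℤ) - 5) : q = 2 ^ n := by
  have h1 := yn_two_pow_dvd a1 n
  have ht : (2 : ℤ) ≤ 2 ^ n := by
    calc (2 : ℤ) = 2 ^ 1 := by norm_num
      _ ≤ 2 ^ n := by gcongr; norm_num; omega
  generalize (2 : ℤ) ^ n = t at *
  have h2 : (4 * (a : ℤ) - 5) ∣ 2 * ((t - q) * (q * t + 1)) := by
    obtain ⟨u, hu⟩ := h
    obtain ⟨v, hv⟩ := h1
    exact ⟨t * u - q * v, by linear_combination t * hu - q * hv⟩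
  have h3 := Int.eq_zero_of_abs_lt_dvd h2 (lt_of_le_of_lt ?_ hs)
  -- `q t + 1 = 0` is impossible because `t ≥ 2`
  · rcases mul_eq_zero.mp (by omega : (t - q) * (q * t + 1) = 0) with h | h
    · omega
    · exfalso
      have : t ∣ 1 := ⟨-q, by linarith⟩
      have := Int.le_of_dvd one_pos this
      omega
  · have e1 : |t - q| ≤ t * (|q| + 1) := by
      rw [abs_le]
      constructor <;> nlinarith [neg_abs_le q, le_abs_self q, abs_nonneg q]
    have e2 : |q * t + 1| ≤ t * (|q| + 1) := by
      rw [abs_le]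
      constructor <;> nlinarith [neg_abs_le q, le_abs_self q, abs_nonneg q]
    rw [abs_mul, abs_mul]
    calc |(2 : ℤ)| * (|t - q| * |q * t + 1|) ≤ 2 * ((t * (|q| + 1)) * (t * (|q| + 1))) := by
          rw [abs_two]; gcongr
      _ ≤ 4 * t ^ 2 * (q ^ 2 + 1) := by
          have : (|q| + 1) ^ 2 ≤ 2 * (q ^ 2 + 1) := by
            rw [← sq_abs q]; nlinarith [sq_nonneg (|q| - 1)]
          nlinarith [sq_nonneg t]

theorem yn_le_pow {a : ℕ} (a1 : 1 < a) (n : ℕ) : yn a1 (n + 1) ≤ (2 * a) ^ n := by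
  induction n with
  | zero => simp
  | succ n ih =>
    have h := yn_succ_succ a1 n
    calc yn a1 (n + 1 + 1) ≤ 2 * a * yn a1 (n + 1) := by rw [← h]; exact Nat.le_add_right _ _
      _ ≤ 2 * a * (2 * a) ^ n := by gcongr
      _ = _ := by ring

theorem pow_le_yn {a : ℕ} (a1 : 1 < a) (n : ℕ) : (2 * a - 1) ^ n ≤ yn a1 (n + 1) := by
  induction n with
  | zero => simp
  | succ n ih =>
    have h := yn_succ_succ a1 n
    have h2 : yn a1 n ≤ yn a1 (n + 1) := (strictMono_y a1).monotone (by omega)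
    calc (2 * a - 1) ^ (n + 1) = (2 * a - 1) * (2 * a - 1) ^ n := by ring
      _ ≤ (2 * a - 1) * yn a1 (n + 1) := by gcongr
      _ = 2 * a * yn a1 (n + 1) - yn a1 (n + 1) := by rw [Nat.sub_mul]; simp
      _ ≤ _ := by rw [← h]; exact Nat.sub_le_of_le_add (by gcongr)

/-- The quotient of two Pell numbers is close to `(V + 1) ^ (2 X) / V ^ X`, the leading parts being
`(2 a) ^ (2 X)` and `(2 c) ^ X`. -/
theorem ratio_bound {a c V U X : ℕ} (a1 : 1 < a) (c1 : 1 < c) (hV : 0 < V) (ha : 2 * a = U * (V + 1))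
    (hc : 2 * c = U ^ 2 * V) (hX : 2 * X ≤ a) (hac : a ≤ c) :
    |(yn a1 (2 * X + 1) : ℝ) / yn c1 (X + 1) - (V + 1 : ℝ) ^ (2 * X) / V ^ X| ≤
      (V + 1 : ℝ) ^ (2 * X) / V ^ X * (X / a) := by
  have hC1 : (yn a1 (2 * X + 1) : ℝ) ≤ (2 * a) ^ (2 * X) := by exact_mod_cast yn_le_pow a1 (2 * X)
  have hJ1 : (yn c1 (X + 1) : ℝ) ≤ (2 * c) ^ X := by exact_mod_cast yn_le_pow c1 X
  have a0 : (0 : ℝ) < a := by positivity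
  have c0 : (0 : ℝ) < c := by positivity
  have V0 : (0 : ℝ) < V := by positivity
  have a1' : (1 : ℝ) < a := by exact_mod_cast a1
  have c1' : (1 : ℝ) < c := by exact_mod_cast c1
  have hac' : (a : ℝ) ≤ c := by exact_mod_cast hac
  have hX' : (2 * X : ℝ) ≤ a := by exact_mod_cast hX
  have hC2 : (2 * a : ℝ) ^ (2 * X) * (1 - X / a) ≤ yn a1 (2 * X + 1) := by
    have h := pow_le_yn a1 (2 * X)
    have h' : ((2 * a : ℝ) - 1) ^ (2 * X) ≤ yn a1 (2 * X + 1) := by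
      have : ((2 * a - 1 : ℕ) : ℝ) = 2 * a - 1 := by
        rw [Nat.cast_sub (by omega)]; push_cast; ring
      rw [← this]; exact_mod_cast h
    refine le_trans ?_ h'
    have hb := one_add_mul_le_pow (a := -(1 / (2 * a : ℝ))) (by
      rw [neg_le_neg_iff, div_le_iff₀ (by positivity)]; linarith) (2 * X)
    calc (2 * a : ℝ) ^ (2 * X) * (1 - X / a)
        = (2 * a : ℝ) ^ (2 * X) * (1 + (2 * X : ℕ) * -(1 / (2 * a : ℝ))) := by
          push_cast; field_simp; ring
      _ ≤ (2 * a : ℝ) ^ (2 * X) * (1 + -(1 / (2 * a : ℝ))) ^ (2 * X) := by gcongr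
      _ = _ := by rw [← mul_pow]; congr 1; field_simp; ring
  have hJ2 : (2 * c : ℝ) ^ X * (1 - X / (2 * a)) ≤ yn c1 (X + 1) := by
    have h := pow_le_yn c1 X
    have h' : ((2 * c : ℝ) - 1) ^ X ≤ yn c1 (X + 1) := by
      have : ((2 * c - 1 : ℕ) : ℝ) = 2 * c - 1 := by
        rw [Nat.cast_sub (by omega)]; push_cast; ring
      rw [← this]; exact_mod_cast h
    refine le_trans ?_ h'
    have hb := one_add_mul_le_pow (a := -(1 / (2 * c : ℝ))) (by
      rw [neg_le_neg_iff, div_le_iff₀ (by positivity)]; linarith) X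
    calc (2 * c : ℝ) ^ X * (1 - X / (2 * a))
        ≤ (2 * c : ℝ) ^ X * (1 - X / (2 * c)) := by gcongr
      _ = (2 * c : ℝ) ^ X * (1 + X * -(1 / (2 * c : ℝ))) := by ring
      _ ≤ (2 * c : ℝ) ^ X * (1 + -(1 / (2 * c : ℝ))) ^ X := by gcongr
      _ = _ := by rw [← mul_pow]; congr 1; field_simp; ring
  have hρ : (2 * a : ℝ) ^ (2 * X) = (V + 1 : ℝ) ^ (2 * X) / V ^ X * (2 * c) ^ X := by
    have ha' : (2 * a : ℝ) = U * (V + 1) := by exact_mod_cast ha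
    have hc' : (2 * c : ℝ) = U ^ 2 * V := by exact_mod_cast hc
    rw [ha', hc', mul_pow, mul_pow, ← pow_mul]
    field_simp
  have hρ0 : 0 < (V + 1 : ℝ) ^ (2 * X) / V ^ X := by positivity
  have hg0 : 0 < (2 * c : ℝ) ^ X := by positivity
  set ρ := (V + 1 : ℝ) ^ (2 * X) / V ^ X
  set γ := (2 * c : ℝ) ^ X
  set e : ℝ := X / a with he
  have he0 : 0 ≤ e := by positivity
  have he1 : e ≤ 1 / 2 := by rw [he, div_le_iff₀ a0]; linarith
  have he2 : (X : ℝ) / (2 * a) = e / 2 := by rw [he]; field_simp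
  rw [he2] at hJ2
  rw [hρ] at hC1 hC2
  have hJ0 : (0 : ℝ) < yn c1 (X + 1) := lt_of_lt_of_le (by
    have : 0 < 1 - e / 2 := by linarith
    positivity) hJ2
  generalize (yn a1 (2 * X + 1) : ℝ) = C at *
  generalize (yn c1 (X + 1) : ℝ) = J at *
  rw [abs_le]
  constructor
  · rw [neg_le_sub_iff_le_add, ← sub_le_iff_le_add, le_div_iff₀ hJ0]
    calc (ρ - ρ * e) * J = ρ * (1 - e) * J := by ring
      _ ≤ ρ * (1 - e) * γ := by
          have : 0 ≤ 1 - e := by linarith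
          gcongr
      _ ≤ C := by linarith
  · rw [sub_le_iff_le_add, div_le_iff₀ hJ0]
    calc C ≤ ρ * γ * 1 := by linarith
      _ ≤ ρ * γ * ((1 + e) * (1 - e / 2)) := by
          gcongr; nlinarith
      _ = ρ * (1 + e) * (γ * (1 - e / 2)) := by ring
      _ ≤ ρ * (1 + e) * J := by gcongr
      _ = _ := by ring

/-- In the expansion of `(V + 1) ^ (2 X)` the terms of degree at least `X` give `V ^ X * M`, with
`M` congruent to the central binomial coefficient modulo `V`, and the rest is small. -/
theorem binomial_split (V X : ℕ) (hV : 0 < V) : ∃ M r t : ℕ, (V + 1) ^ (2 * X) = V ^ X * M + r ∧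
    r * V ≤ V ^ X * 4 ^ X ∧ M = (2 * X).choose X + V * t := by
  have h := add_pow V 1 (2 * X)
  rw [show 2 * X + 1 = X + (X + 1) by ring, Finset.sum_range_add, Finset.sum_range_succ'] at h
  simp only [one_pow, mul_one] at h
  refine ⟨_, ∑ i ∈ Finset.range X, V ^ i * (2 * X).choose i,
    ∑ i ∈ Finset.range X, V ^ i * (2 * X).choose (X + (i + 1)), ?_, ?_, rfl⟩
  · rw [h, add_comm]
    congr 1
    rw [mul_add, add_comm]
    congr 1
    rw [Finset.mul_sum, Finset.mul_sum]
    apply Finset.sum_congr rfl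
    intro i _
    simp only [Nat.cast_id]
    ring
  · rw [Finset.sum_mul, show (4 : ℕ) ^ X = 2 ^ (2 * X) by rw [pow_mul]; norm_num]
    rw [← Nat.sum_range_choose, Finset.mul_sum]
    calc ∑ i ∈ Finset.range X, V ^ i * (2 * X).choose i * V
        ≤ ∑ i ∈ Finset.range X, V ^ X * (2 * X).choose i := by
          apply Finset.sum_le_sum
          intro i hi
          rw [Finset.mem_range] at hi
          calc V ^ i * (2 * X).choose i * V = V ^ (i + 1) * (2 * X).choose i := by ring
            _ ≤ _ := by gcongr; omega
      _ ≤ _ := by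
          apply Finset.sum_le_sum_of_subset
          apply Finset.range_mono
          omega

end

/-! ### From Pell conditions to divisibility of a central binomial coefficient -/

section
open Pell

/-- The error term of `ratio_bound` is small, because `a` contains the factor `Z (l² + 1)`. -/
theorem rho_error {X Y Z L V a : ℕ} {l : ℤ} {ρ : ℝ} (hX : 0 < X) (hY : 0 < Y) (hZ : 100 * X * Y ≤ Z)
    (hL : (L : ℤ) = l ^ 2 + 1) (hV : 0 < V) (ha : a = Z * L * (V + 1)) (hl : 1 ≤ l)
    (hρ : ρ ≤ 2 * (l * Y)) : ρ * (X / a) ≤ 1 / (50 * V) := by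
  have hl' : (1 : ℝ) ≤ l := by exact_mod_cast hl
  have hX' : (0 : ℝ) < X := by exact_mod_cast hX
  have hY' : (0 : ℝ) < Y := by exact_mod_cast hY
  have hV' : (0 : ℝ) < V := by exact_mod_cast hV
  have hL' : (L : ℝ) = l ^ 2 + 1 := by exact_mod_cast hL
  have hZ' : (100 * X * Y : ℝ) ≤ Z := by exact_mod_cast hZ
  have hlow : (100 * X * Y : ℝ) * l * V ≤ a := by
    rw [ha]; push_cast; rw [hL']
    have : (l : ℝ) ≤ l ^ 2 + 1 := by nlinarith
    gcongr
    linarith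
  have ha0 : (0 : ℝ) < a := lt_of_lt_of_le (by positivity) hlow
  calc ρ * (X / a) ≤ 2 * (l * Y) * (X / a) := by gcongr
    _ = (2 * (l * Y) * X) / a := by ring
    _ ≤ (2 * (l * Y) * X) / ((100 * X * Y : ℝ) * l * V) := by gcongr
    _ = 1 / (50 * V) := by field_simp; norm_num

/-- The quotient `(V + 1) ^ (2 X) / V ^ X` has the integer `M` of `binomial_split` as its approximate value. -/
theorem rho_eq {V X M r : ℕ} (hV : 0 < V) (h : (V + 1) ^ (2 * X) = V ^ X * M + r)
    (hr : r * V ≤ V ^ X * 4 ^ X) : (M : ℝ) ≤ (V + 1 : ℝ) ^ (2 * X) / V ^ X ∧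
    (V + 1 : ℝ) ^ (2 * X) / V ^ X ≤ M + 4 ^ X / V := by
  have hV' : (0 : ℝ) < V := by exact_mod_cast hV
  have h' : (V + 1 : ℝ) ^ (2 * X) = V ^ X * M + r := by exact_mod_cast h
  have hr' : (r : ℝ) * V ≤ V ^ X * 4 ^ X := by exact_mod_cast hr
  rw [h']
  constructor
  · rw [le_div_iff₀ (by positivity)]
    have : (0 : ℝ) ≤ r := by positivity
    linarith
  · rw [div_le_iff₀ (by positivity)]
    have : (r : ℝ) ≤ V ^ X * 4 ^ X / V := by rw [le_div_iff₀ hV']; exact hr'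
    calc (V : ℝ) ^ X * M + r ≤ V ^ X * M + V ^ X * 4 ^ X / V := by gcongr
      _ = _ := by ring

theorem pell_params {G Y X Z L Q V a c : ℕ} {l q : ℤ} (hG : 1 ≤ G) (hY : 16 ≤ Y) (hX : 2 ≤ X)
    (hZ : 100 * X * Y ≤ Z) (hL : (L : ℤ) = l ^ 2 + 1) (hQ : (Q : ℤ) = q ^ 2 + 1)
    (hV : V = 4 * G * Y * Q) (ha : a = Z * L * (V + 1)) (hc : c = 2 * Z ^ 2 * L ^ 2 * V) :
    64 * G * Q ≤ V ∧ 1 ≤ Q ∧ 100 * X < a ∧ a + 1 ≤ c ∧ 2 * a = 2 * Z * L * (V + 1) ∧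
    2 * c = (2 * Z * L) ^ 2 * V := by
  have hL1 : 1 ≤ L := by zify; rw [hL]; nlinarith
  have hQ1 : 1 ≤ Q := by zify; rw [hQ]; nlinarith
  have hV1 : 64 * G * Q ≤ V := by
    rw [hV]
    calc 64 * G * Q = 4 * G * 16 * Q := by ring
      _ ≤ _ := by gcongr
  have hV0 : 1 ≤ V := le_trans (by nlinarith [Nat.mul_pos hG hQ1]) hV1
  have hZ1 : 1600 * X ≤ Z := by nlinarith
  have hZL : Z ≤ Z * L := Nat.le_mul_of_pos_right _ hL1
  refine ⟨hV1, hQ1, ?_, ?_, by rw [ha]; ring, by rw [hc]; ring⟩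
  · rw [ha]; nlinarith
  · rw [ha, hc]
    have e : 2 * Z ^ 2 * L ^ 2 * V = 2 * (Z * L) * (Z * L * V) := by ring
    rw [e]
    have e1 : 3200 ≤ Z * L := by omega
    generalize Z * L = W at *
    nlinarith [Nat.mul_le_mul e1 hV0]

theorem sq_two_pow (X : ℕ) : ((2 : ℤ) ^ (2 * X + 1)) ^ 2 = 4 * 16 ^ X := by
  rw [← pow_mul, show (2 * X + 1) * 2 = 4 * X + 2 by ring, pow_add, pow_mul]; norm_num; ring

/-- The size condition of `eq_two_pow` for the exponent `2 X + 1`. -/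
theorem q_size {X Y Z L V Q a : ℕ} {l : ℤ} (hX : 1 ≤ X) (hY : 16 ≤ Y) (hZ : 100 * X * Y ≤ Z)
    (hL : (L : ℤ) = l ^ 2 + 1) (ha : a = Z * L * (V + 1)) (hl : 1 ≤ l)
    (h5 : (V : ℤ) ^ X ≤ 2 * (l * Y)) (hV64 : 64 * Q ≤ V) (hQ1 : 1 ≤ Q) :
    4 * ((2 : ℤ) ^ (2 * X + 1)) ^ 2 * Q < 4 * (a : ℤ) - 5 := by
  have h6 : (16 : ℤ) ^ X ≤ V ^ X := by
    have : (16 : ℤ) ≤ V := by omega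
    gcongr
  have h8 : (100 * (l * Y)) * V ≤ (a : ℤ) := by
    rw [ha]; push_cast; rw [hL]
    have hZ' : (100 * X * Y : ℤ) ≤ Z := by exact_mod_cast hZ
    have hX' : (1 : ℤ) ≤ X := by exact_mod_cast hX
    have h1 : (100 * (l * Y) : ℤ) ≤ Z * (l ^ 2 + 1) := by
      calc (100 * (l * Y) : ℤ) = (100 * 1 * Y) * l := by ring
        _ ≤ (100 * X * Y) * (l ^ 2 + 1) := by gcongr; nlinarith
        _ ≤ _ := by gcongr
    have h2 : (V : ℤ) ≤ V + 1 := by omega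
    exact mul_le_mul h1 h2 (by positivity) (by positivity)
  have h9 : (64 * Q : ℤ) ≤ V := by exact_mod_cast hV64
  have h10 : (1 : ℤ) ≤ 16 ^ X := one_le_pow₀ (by norm_num)
  have hQ1' : (1 : ℤ) ≤ Q := by exact_mod_cast hQ1
  have h11 : (50 * 16 ^ X) * (64 * Q) ≤ (a : ℤ) :=
    (mul_le_mul (by linarith) h9 (by positivity) (by positivity)).trans h8
  have h12 : (1 : ℤ) * 1 ≤ 16 ^ X * Q := mul_le_mul h10 hQ1' zero_le_one (by positivity)
  rw [sq_two_pow]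
  linarith

set_option maxHeartbeats 1000000 in
/-- The Pell conditions imply that `C / J` is within `1/4` of `l Y` and close to the integer `M` of
`binomial_split`. Hence `M = l Y`, and as `Y` divides `V`, it divides the central binomial
coefficient. The same estimates make `a` large enough for `q` to be determined. -/
theorem bridge_backward {G Y X Z L Q V a c : ℕ} {l q : ℤ} (hG : 1 ≤ G) (hY : 16 ≤ Y) (hX : 2 ≤ X)
    (hZ : 100 * X * Y ≤ Z) (hL : (L : ℤ) = l ^ 2 + 1) (hQ : (Q : ℤ) = q ^ 2 + 1)
    (hV : V = 4 * G * Y * Q) (ha : a = Z * L * (V + 1)) (hc : c = 2 * Z ^ 2 * L ^ 2 * V)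
    {h k x y C J : ℤ} (hx : x ≠ 0) (hl : l ≠ 0) (hC : C = pC a (2 * X + 1 : ℕ) h)
    (h1 : ∃ r, pD a (2 * X + 1 : ℕ) h * pF a (2 * X + 1 : ℕ) h x * pI a (2 * X + 1 : ℕ) h x y = r ^ 2)
    (hJ : J = X + 1 + k * (c - 1)) (h2 : ∃ r, ((c : ℤ) ^ 2 - 1) * J ^ 2 + 1 = r ^ 2)
    (h3 : (4 * (a : ℤ) - 5) ∣ 3 * q * C - 2 * (q ^ 2 - 1))
    (hR : 16 * (C - l * Y * J) ^ 2 < J ^ 2) :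
    q = 2 ^ (2 * X + 1) ∧ Y ∣ (2 * X).choose X := by
  obtain ⟨hV1, hQ1, haX, hac, ha2, hc2⟩ := pell_params hG hY hX hZ hL hQ hV ha hc
  have hV64 : 64 * Q ≤ V := le_trans (by nlinarith) hV1
  have hV0 : 0 < V := by omega
  have a1 : 1 < a := by omega
  have c1 : 1 < c := by omega
  rw [pell_backward a1 (by omega) (by omega) hx h1] at hC
  obtain ⟨j, hj⟩ := natAbs_eq_yn c1 h2
  have habs : 4 * |C - l * Y * J| < |J| := by
    have : (4 * (C - l * Y * J)) ^ 2 < J ^ 2 := by linarith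
    have := sq_lt_sq.mp this
    rwa [abs_mul, show |(4 : ℤ)| = 4 from rfl] at this
  -- the index of `J` is `X + 1`
  have hJX : J = yn c1 (X + 1) := by
    have hcj := yn_sub_dvd c1 j
    have hcJ : ((c : ℤ) - 1) ∣ J - (X + 1) := ⟨k, by rw [hJ]; ring⟩
    have hcase : J = yn c1 (X + 1) ∨ 2 * X + 2 ≤ j := by
      rcases Int.natAbs_eq J with h' | h'
      · rw [hj] at h'
        by_cases hjX : 2 * X + 2 ≤ j
        · exact Or.inr hjX
        · left
          rw [h'] at hcJ
          obtain ⟨s, hs⟩ := hcj.sub hcJ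
          have : ((c : ℤ) - 1) ∣ (X + 1 : ℤ) - j := ⟨s, by linarith⟩
          have := Int.eq_zero_of_abs_lt_dvd this (by rw [abs_lt]; constructor <;> omega)
          have : j = X + 1 := by omega
          rw [h', this]
      · rw [hj] at h'
        right
        rw [h'] at hcJ
        obtain ⟨s, hs⟩ := hcj.add hcJ
        have : ((c : ℤ) - 1) ∣ (X + 1 : ℤ) + j := ⟨-s, by linarith⟩
        have := Int.le_of_dvd (by omega) this
        omega
    rcases hcase with h' | h'
    · exact h'
    · exfalso
      -- a larger index would make `J` much larger than `C`, against the inequality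
      have hCJ : 2 * C ≤ |J| := by
        rw [Int.abs_eq_natAbs, hj, hC]
        norm_cast
        calc 2 * yn a1 (2 * X + 1) ≤ 2 * (2 * a) ^ (2 * X) := by gcongr; exact yn_le_pow a1 _
          _ ≤ (2 * c - 1) * (2 * c - 1) ^ (2 * X) := by gcongr <;> omega
          _ = (2 * c - 1) ^ (2 * X + 1) := by ring
          _ ≤ yn c1 (2 * X + 1 + 1) := pow_le_yn c1 _
          _ ≤ yn c1 j := (strictMono_y c1).monotone h'
      have hC0 : 0 ≤ C := by rw [hC]; positivity
      have hlY : 16 * |J| ≤ |l * Y * J| := by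
        rw [abs_mul]
        gcongr
        rw [abs_mul, Nat.abs_cast]
        have : 1 ≤ |l| := Int.one_le_abs hl
        nlinarith
      have h4 := abs_sub_abs_le_abs_sub (l * Y * J) C
      rw [abs_sub_comm, abs_of_nonneg hC0] at h4
      have := abs_nonneg J
      omega
  have hJ0 : 0 < J := by
    rw [hJX]
    have := strictMono_y c1 (Nat.succ_pos X); simp only [yn_zero] at this
    exact_mod_cast this
  rw [abs_of_pos hJ0] at habs
  -- real estimates
  have hJ0' : (0 : ℝ) < J := by exact_mod_cast hJ0
  have hRl : |(C : ℝ) / J - l * Y| < 1 / 4 := by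
    have e : (C : ℝ) / J - l * Y = (C - l * Y * J) / J := by field_simp
    rw [e, abs_div, abs_of_pos hJ0', div_lt_iff₀ hJ0']
    have : 4 * |(C : ℝ) - l * Y * J| < J := by exact_mod_cast habs
    linarith
  have hrat := ratio_bound (X := X) a1 c1 hV0 ha2 hc2 (by omega) (by omega)
  have eC : (C : ℝ) = yn a1 (2 * X + 1) := by rw [hC]; simp
  have eJ : (J : ℝ) = yn c1 (X + 1) := by rw [hJX]; simp
  rw [← eC, ← eJ] at hrat
  have hVr : (1 : ℝ) ≤ V := by exact_mod_cast hV0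
  have hρV : (V : ℝ) ^ X ≤ (V + 1 : ℝ) ^ (2 * X) / V ^ X := by
    rw [le_div_iff₀ (by positivity), ← pow_add, ← two_mul]
    gcongr; linarith
  have hV1X : (1 : ℝ) ≤ (V : ℝ) ^ X := one_le_pow₀ hVr
  obtain ⟨M, r, t, hM, hr, hMt⟩ := binomial_split V X hV0
  obtain ⟨hρ1, hρ2⟩ := rho_eq hV0 hM hr
  generalize (V + 1 : ℝ) ^ (2 * X) / V ^ X = ρ at *
  have he : (X : ℝ) / a ≤ 1 / 100 := by
    rw [div_le_iff₀ (by positivity)]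
    have : (100 * X : ℝ) < a := by exact_mod_cast haX
    linarith
  have hR' := abs_lt.mp hRl
  have hrat' := abs_le.mp hrat
  have hρ0 : 0 ≤ ρ := by linarith
  have hρ3 : ρ * (99 / 100) < l * Y + 1 / 4 := by
    have : ρ * (X / a) ≤ ρ * (1 / 100) := by gcongr
    linarith
  have hl1 : 1 ≤ l := by
    have h5 : (0 : ℝ) < l * Y := by linarith
    have h6 : (0 : ℝ) < l := by
      by_contra! h7
      have : (l : ℝ) * Y ≤ 0 := mul_nonpos_of_nonpos_of_nonneg h7 (by positivity)
      linarith
    have : 0 < l := by exact_mod_cast h6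
    omega
  have hl1' : (1 : ℝ) ≤ l := by exact_mod_cast hl1
  have hY' : (16 : ℝ) ≤ Y := by exact_mod_cast hY
  have hlY : (16 : ℝ) ≤ l * Y := by nlinarith
  have hρ4 : ρ ≤ 2 * (l * Y) := by linarith
  have herr := rho_error (by omega) (by omega) hZ hL hV0 ha hl1 hρ4
  have herr2 : (1 : ℝ) / (50 * V) ≤ 1 / 50 := by
    apply one_div_le_one_div_of_le <;> linarith
  -- `q` is the right power of two
  have hq : q = 2 ^ (2 * X + 1) := by
    apply eq_two_pow a1 (by omega) (by rw [← hC]; exact h3)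
    have h5 : (V : ℤ) ^ X ≤ 2 * (l * Y) := by exact_mod_cast le_trans hρV hρ4
    rw [← hQ]
    exact q_size (by omega) hY hZ hL ha hl1 h5 hV64 hQ1
  refine ⟨hq, ?_⟩
  -- `V` exceeds `64 q²`, which is now known to be large
  have h4V : (4 : ℝ) ^ X / V ≤ 1 / 4 := by
    rw [div_le_iff₀ (by positivity)]
    have h5 : 4 * 4 ^ X ≤ V := by
      refine le_trans ?_ hV64
      zify
      rw [hQ, hq, sq_two_pow]
      have h6 : (4 : ℤ) ^ X ≤ 16 ^ X := by gcongr; norm_num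
      have h7 : (0 : ℤ) ≤ 16 ^ X := by positivity
      linarith
    have : (4 * 4 ^ X : ℝ) ≤ V := by exact_mod_cast h5
    linarith
  have hMl : (M : ℤ) = l * Y := by
    have : |((M : ℤ) - l * Y : ℤ)| < 1 := by
      have : |(M : ℝ) - l * Y| < 1 := by rw [abs_lt]; constructor <;> linarith
      exact_mod_cast this
    have := Int.abs_lt_one_iff.mp this
    linarith
  have hYM : (Y : ℤ) ∣ M := ⟨l, by rw [hMl]; ring⟩
  have hYMnat : Y ∣ M := by exact_mod_cast hYM
  rw [hMt] at hYMnat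
  exact (Nat.dvd_add_left (Dvd.dvd.mul_right (hV ▸ ⟨4 * G * Q, by ring⟩) t)).mp hYMnat

/-- The converse of `bridge_backward`, with an inequality sharper by the factor `G²`. The integer `l`
is the quotient `M / Y`; it depends only on `G`, `Y` and `X`. -/
theorem bridge_forward {G Y X Z : ℕ} (hG : 1 ≤ G) (hY : 16 ≤ Y) (hX : 2 ≤ X)
    (hZ : 100 * X * Y ≤ Z) (hdvd : Y ∣ (2 * X).choose X) : ∃ l : ℤ, l ≠ 0 ∧
    ∀ {L Q V a c : ℕ} {q : ℤ}, q = 2 ^ (2 * X + 1) → (L : ℤ) = l ^ 2 + 1 → (Q : ℤ) = q ^ 2 + 1 →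
    V = 4 * G * Y * Q → a = Z * L * (V + 1) → c = 2 * Z ^ 2 * L ^ 2 * V →
    ∃ h k x y C J : ℤ, x ≠ 0 ∧ C = pC a (2 * X + 1 : ℕ) h ∧
    (∃ r, pD a (2 * X + 1 : ℕ) h * pF a (2 * X + 1 : ℕ) h x * pI a (2 * X + 1 : ℕ) h x y = r ^ 2) ∧
    J = X + 1 + k * (c - 1) ∧ (∃ r, ((c : ℤ) ^ 2 - 1) * J ^ 2 + 1 = r ^ 2) ∧
    (4 * (a : ℤ) - 5) ∣ 3 * q * C - 2 * (q ^ 2 - 1) ∧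
    16 * G ^ 2 * (C - l * Y * J) ^ 2 < J ^ 2 := by
  set V₀ := 4 * G * Y * ((2 ^ (2 * X + 1)) ^ 2 + 1) with hV₀
  have hV₀0 : 0 < V₀ := by positivity
  obtain ⟨M, r, t, hM, hr, hMt⟩ := binomial_split V₀ X hV₀0
  obtain ⟨l, hl⟩ : Y ∣ M := by
    rw [hMt]
    exact dvd_add hdvd (Dvd.dvd.mul_right ⟨4 * G * ((2 ^ (2 * X + 1)) ^ 2 + 1), by rw [hV₀]; ring⟩ t)
  have hM0 : 0 < M := by
    rw [hMt]
    have := Nat.choose_pos (show X ≤ 2 * X by omega)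
    omega
  have hl0 : l ≠ 0 := by rintro rfl; simp at hl; omega
  refine ⟨l, by exact_mod_cast hl0, ?_⟩
  intro L Q V a c q hq hL hQ hV ha hc
  obtain ⟨hV1, hQ1, haX, hac, ha2, hc2⟩ := pell_params hG hY hX hZ hL hQ hV ha hc
  have hQ' : Q = (2 ^ (2 * X + 1)) ^ 2 + 1 := by zify; rw [hQ, hq]
  rw [hQ', ← hV₀] at hV
  subst hV
  have a1 : 1 < a := by omega
  have c1 : 1 < c := by omega
  obtain ⟨h, x, y, hx, hC, hsq⟩ := pell_forward a1 (Nat.succ_pos (2 * X))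
  obtain ⟨k, hk⟩ := yn_sub_dvd c1 (X + 1)
  refine ⟨h, k, x, y, yn a1 (2 * X + 1), yn c1 (X + 1), hx, hC.symm, hsq,
    by push_cast at hk; linarith, ⟨_, pell_eq_int c1 _⟩, ?_, ?_⟩
  · rw [hq]; exact yn_two_pow_dvd a1 _
  have hJ0 : 0 < yn c1 (X + 1) := by
    have := strictMono_y c1 (Nat.succ_pos X); simpa only [yn_zero] using this
  have hrat := ratio_bound (X := X) a1 c1 hV₀0 ha2 hc2 (by omega) (by omega)
  obtain ⟨hρ1, hρ2⟩ := rho_eq hV₀0 hM hr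
  have hVr : (64 * G * Q : ℝ) ≤ V₀ := by exact_mod_cast hV1
  have hQr : (4 * 4 ^ X : ℝ) ≤ Q := by
    have : 4 * 4 ^ X ≤ Q := by
      zify
      rw [hQ, hq, sq_two_pow]
      have h6 : (4 : ℤ) ^ X ≤ 16 ^ X := by gcongr; norm_num
      have h7 : (0 : ℤ) ≤ 16 ^ X := by positivity
      linarith
    exact_mod_cast this
  have hG' : (1 : ℝ) ≤ G := by exact_mod_cast hG
  have h4X : (1 : ℝ) ≤ 4 ^ X := one_le_pow₀ (by norm_num)
  have hVr2 : (256 * G * 4 ^ X : ℝ) ≤ V₀ := by nlinarith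
  have hVr0 : (0 : ℝ) < V₀ := by exact_mod_cast hV₀0
  have h4V : (4 : ℝ) ^ X / V₀ ≤ 1 / (256 * G) := by
    rw [div_le_div_iff₀ (by positivity) (by positivity)]; linarith
  have hG2 : (1 : ℝ) / (256 * G) ≤ 1 / 256 := by
    apply one_div_le_one_div_of_le <;> linarith
  have hM' : (M : ℝ) = l * Y := by rw [hl]; push_cast; ring
  have hM1 : (1 : ℝ) ≤ M := by exact_mod_cast hM0
  have herr := rho_error (l := l) (ρ := (V₀ + 1 : ℝ) ^ (2 * X) / V₀ ^ X) (by omega) (by omega) hZ hL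
    hV₀0 ha (by omega) (by push_cast; rw [← hM']; linarith)
  have herr2 : (1 : ℝ) / (50 * V₀) ≤ 1 / (256 * G) := by
    apply one_div_le_one_div_of_le (by positivity)
    nlinarith
  have hfin : |(yn a1 (2 * X + 1) : ℝ) / yn c1 (X + 1) - l * Y| < 1 / (4 * G) := by
    have hrat' := abs_le.mp (hrat.trans (herr.trans herr2))
    have e : (1 : ℝ) / (4 * G) = 64 * (1 / (256 * G)) := by field_simp; norm_num
    have e0 : (0 : ℝ) < 1 / (256 * G) := by positivity
    rw [e, abs_lt, ← hM']
    constructor <;> linarith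
  have hJ0' : (0 : ℝ) < yn c1 (X + 1) := by exact_mod_cast hJ0
  have e : (yn a1 (2 * X + 1) : ℝ) / yn c1 (X + 1) - l * Y =
    (yn a1 (2 * X + 1) - l * Y * yn c1 (X + 1)) / yn c1 (X + 1) := by field_simp
  rw [e, abs_div, abs_of_pos hJ0', div_lt_div_iff₀ hJ0' (by positivity)] at hfin
  have h1 : (4 * G * (yn a1 (2 * X + 1) - l * Y * yn c1 (X + 1)) : ℝ) ^ 2 < (yn c1 (X + 1) : ℝ) ^ 2 := by
    rw [sq_lt_sq, abs_mul, abs_of_pos hJ0', abs_of_pos (by positivity : (0 : ℝ) < 4 * G)]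
    linarith
  have h2 : (16 * G ^ 2 * (yn a1 (2 * X + 1) - l * Y * yn c1 (X + 1)) ^ 2 : ℝ) <
    (yn c1 (X + 1) : ℝ) ^ 2 := by linarith
  exact_mod_cast h2

end

/-! ### Binary digit sums and masking -/

/-- The number of ones in the binary expansion of `n`. -/
def popc (n : ℕ) : ℕ := (Nat.digits 2 n).sum

theorem popc_zero : popc 0 = 0 := by simp [popc]

theorem popc_double_add (n : ℕ) {b : ℕ} (hb : b < 2) : popc (b + 2 * n) = b + popc n := by
  rcases Nat.eq_zero_or_pos n with rfl | hn
  · interval_cases b <;> simp [popc]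
  · unfold popc
    rw [Nat.digits_add 2 (by norm_num) b n hb (Or.inr hn.ne')]
    simp

theorem popc_append (k : ℕ) {x : ℕ} (y : ℕ) (hx : x < 2 ^ k) : popc (x + 2 ^ k * y) = popc x + popc y := by
  induction k generalizing x with
  | zero => obtain rfl : x = 0 := by simpa using hx
            simp [popc_zero]
  | succ k ih =>
    rw [pow_succ] at hx
    have h1 := ih (x := x / 2) (by omega)
    have e : x + 2 ^ (k + 1) * y = x % 2 + 2 * (x / 2 + 2 ^ k * y) := by
      rw [pow_succ]
      have := Nat.mod_add_div x 2
      linarith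
    rw [e, popc_double_add _ (Nat.mod_lt _ two_pos), h1]
    have := popc_double_add (x / 2) (Nat.mod_lt x two_pos)
    rw [Nat.mod_add_div] at this
    omega

theorem popc_compl (k : ℕ) {x : ℕ} (hx : x < 2 ^ k) : popc x + popc (2 ^ k - 1 - x) = k := by
  induction k generalizing x with
  | zero => obtain rfl : x = 0 := by simpa using hx
            simp [popc_zero]
  | succ k ih =>
    rw [pow_succ] at hx
    have h1 := ih (x := x / 2) (by omega)
    have e : 2 ^ (k + 1) - 1 - x = (1 - x % 2) + 2 * (2 ^ k - 1 - x / 2) := by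
      rw [pow_succ]
      omega
    rw [e, popc_double_add _ (by omega)]
    have := popc_double_add (x / 2) (Nat.mod_lt x two_pos)
    rw [Nat.mod_add_div] at this
    omega

theorem popc_add_one_le (n : ℕ) : popc (n + 1) ≤ popc n + 1 := by
  induction n using Nat.strong_induction_on with
  | _ n ih =>
    have h := popc_double_add (n / 2) (Nat.mod_lt n two_pos)
    rw [Nat.mod_add_div] at h
    rcases Nat.mod_two_eq_zero_or_one n with h0 | h0
    · have := popc_double_add (n / 2) (b := 1) (by norm_num)
      rw [show 1 + 2 * (n / 2) = n + 1 by omega] at this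
      omega
    · have h2 := popc_double_add (n / 2 + 1) (b := 0) (by norm_num)
      rw [show 0 + 2 * (n / 2 + 1) = n + 1 by omega] at h2
      have := ih (n / 2) (by omega)
      omega

theorem land_eq_zero_split (k S T : ℕ) :
    S &&& T = 0 ↔ (S % 2 ^ k) &&& (T % 2 ^ k) = 0 ∧ (S / 2 ^ k) &&& (T / 2 ^ k) = 0 := by
  rw [← Nat.and_mod_two_pow, ← Nat.and_div_two_pow]
  constructor
  · intro h; simp [h]
  · rintro ⟨h1, h2⟩
    have := Nat.mod_add_div (S &&& T) (2 ^ k)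
    rw [h1, h2] at this
    simpa using this.symm

/-- Disjointness of binary digits can be tested separately on the low `k` digits and on the rest. -/
theorem land_eq_zero_block {k x x' : ℕ} (y y' : ℕ) (hx : x < 2 ^ k) (hx' : x' < 2 ^ k) :
    (x + 2 ^ k * y) &&& (x' + 2 ^ k * y') = 0 ↔ x &&& x' = 0 ∧ y &&& y' = 0 := by
  have h : 0 < 2 ^ k := by positivity
  rw [land_eq_zero_split k, Nat.add_mul_mod_self_left, Nat.add_mul_mod_self_left,
    Nat.add_mul_div_left _ _ h, Nat.add_mul_div_left _ _ h, Nat.mod_eq_of_lt hx,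
    Nat.mod_eq_of_lt hx', Nat.div_eq_of_lt hx, Nat.div_eq_of_lt hx', zero_add, zero_add]

/-- The binary digit sum is subadditive, with equality exactly when the addition produces no carry,
that is, when no digit is one in both summands. -/
theorem popc_add (S T : ℕ) : popc (S + T) ≤ popc S + popc T ∧
    (popc S + popc T ≤ popc (S + T) ↔ S &&& T = 0) := by
  induction S using Nat.strong_induction_on generalizing T with
  | _ S ih =>
    rcases Nat.eq_zero_or_pos S with rfl | hS
    · simp [popc_zero]
    obtain ⟨h1, h2⟩ := ih (S / 2) (by omega) (T / 2)
    have hs := popc_double_add (S / 2) (Nat.mod_lt S two_pos)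
    have ht := popc_double_add (T / 2) (Nat.mod_lt T two_pos)
    rw [Nat.mod_add_div] at hs ht
    rw [land_eq_zero_split 1, pow_one]
    rcases Nat.mod_two_eq_zero_or_one S with a | a <;> rcases Nat.mod_two_eq_zero_or_one T with b | b
    · have := popc_double_add (S / 2 + T / 2) (b := 0) (by norm_num)
      rw [show 0 + 2 * (S / 2 + T / 2) = S + T by omega] at this
      rw [← h2, a, b]; simp; omega
    · have := popc_double_add (S / 2 + T / 2) (b := 1) (by norm_num)
      rw [show 1 + 2 * (S / 2 + T / 2) = S + T by omega] at this
      rw [← h2, a, b]; simp; omega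
    · have := popc_double_add (S / 2 + T / 2) (b := 1) (by norm_num)
      rw [show 1 + 2 * (S / 2 + T / 2) = S + T by omega] at this
      rw [← h2, a, b]; simp; omega
    · have := popc_double_add (S / 2 + T / 2 + 1) (b := 0) (by norm_num)
      rw [show 0 + 2 * (S / 2 + T / 2 + 1) = S + T by omega] at this
      have := popc_add_one_le (S / 2 + T / 2)
      rw [a, b]; simp; omega

/-- Kummer's theorem for the prime `2`. -/
theorem two_pow_dvd_centralBinom (m X : ℕ) : 2 ^ m ∣ (2 * X).choose X ↔ m ≤ popc X := by
  have h := sub_one_mul_padicValNat_choose_eq_sub_sum_digits' (p := 2) (k := X) (n := X)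
  have hd : popc (X + X) = popc X := by
    have := popc_double_add X (b := 0) (by norm_num)
    rw [show 0 + 2 * X = X + X by ring] at this
    omega
  have hv : padicValNat 2 ((2 * X).choose X) = popc X := by
    unfold popc at hd ⊢
    rw [two_mul]
    omega
  rw [padicValNat_dvd_iff_le (p := 2) (by have := Nat.choose_pos (show X ≤ 2 * X by omega); omega), hv]

/-- Disjointness of the binary digits of `S` and `T` as one divisibility. The number `X` is the
concatenation of three blocks, `S + T` and the complements of `S` and `T` with respect to `r` digits; its
digit sum is `2 r + popc (S + T) - popc S - popc T`, which is at least `2 r` exactly when the addition of `S`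
and `T` has no carry. -/
theorem mask_iff {r S T : ℕ} (hS : S < 2 ^ r) (hT : T < 2 ^ r) :
    ((2 ^ r) ^ 2) ∣ (2 * ((S + T) * (2 ^ r) ^ 2 + (2 ^ r - 1 - S) * 2 ^ r + (2 ^ r - 1 - T))).choose
      ((S + T) * (2 ^ r) ^ 2 + (2 ^ r - 1 - S) * 2 ^ r + (2 ^ r - 1 - T)) ↔ S &&& T = 0 := by
  rw [← (popc_add S T).2, ← pow_mul, two_pow_dvd_centralBinom]
  have e : (S + T) * 2 ^ (r * 2) + (2 ^ r - 1 - S) * 2 ^ r + (2 ^ r - 1 - T) =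
    (2 ^ r - 1 - T) + 2 ^ r * ((2 ^ r - 1 - S) + 2 ^ r * (S + T)) := by
    rw [pow_mul]; ring
  rw [e, popc_append _ _ (by omega), popc_append _ _ (by omega)]
  have := popc_compl r hS
  have := popc_compl r hT
  omega

/-! ### A value of a polynomial as a coefficient -/

/-- Uniqueness of expansions in base `B` with digits below `B`. -/
theorem digits_unique (B : ℕ) : ∀ (n : ℕ) (k m : Fin n → ℕ), (∀ i, k i < B) → (∀ i, m i < B) →
    ∑ i, k i * B ^ (i : ℕ) = ∑ i, m i * B ^ (i : ℕ) → k = m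
  | 0, k, m, _, _, _ => funext fun i => i.elim0
  | n + 1, k, m, hk, hm, h => by
    have hB : 0 < B := lt_of_le_of_lt (Nat.zero_le _) (hk 0)
    have e : ∀ f : Fin (n + 1) → ℕ, ∑ i, f i * B ^ (i : ℕ) =
        f 0 + B * ∑ i : Fin n, f i.succ * B ^ (i : ℕ) := by
      intro f
      rw [Fin.sum_univ_succ, Finset.mul_sum]
      simp only [Fin.val_zero, pow_zero, mul_one, Fin.val_succ, pow_succ]
      congr 1
      exact Finset.sum_congr rfl fun i _ => by ring
    rw [e, e] at h
    have h0 : k 0 = m 0 := by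
      have := congrArg (· % B) h
      simpa [Nat.add_mul_mod_self_left, Nat.mod_eq_of_lt (hk 0), Nat.mod_eq_of_lt (hm 0)] using this
    rw [h0] at h
    have h1 := Nat.eq_of_mul_eq_mul_left hB (Nat.add_left_cancel h)
    have h2 := digits_unique B n (fun i => k i.succ) (fun i => m i.succ) (fun i => hk _) (fun i => hm _) h1
    funext i
    refine Fin.cases h0 (fun j => congrFun h2 j) i

open Polynomial in
/-- The monomial `∏ y i ^ m i` is read off from the multinomial expansion of a power of one polynomial
in `X`: the exponent `∑ m i (δ + 1) ^ i` determines `m`, by uniqueness of digits in base `δ + 1`. -/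
theorem coeff_monomial_coding (n δ : ℕ) (m : Fin (n + 1) → ℕ) (hm : ∑ i, m i ≤ δ)
    (y : Fin (n + 1) → ℤ) :
    ((∏ i, (m i).factorial) * (δ - ∑ i, m i).factorial : ℤ) *
    ((1 + ∑ j : Fin (n + 1), C (y j) * X ^ ((δ + 1) ^ (j : ℕ))) ^ δ : ℤ[X]).coeff
      (∑ i, m i * (δ + 1) ^ (i : ℕ)) = δ.factorial * ∏ i, y i ^ m i := by
  let Y : Fin (n + 2) → ℤ := Fin.cons 1 y
  let q : Fin (n + 2) → ℕ := Fin.cons 0 (fun j => (δ + 1) ^ (j : ℕ))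
  have hF : (1 + ∑ j : Fin (n + 1), C (y j) * X ^ ((δ + 1) ^ (j : ℕ)) : ℤ[X]) =
      ∑ i : Fin (n + 2), C (Y i) * X ^ (q i) := by
    rw [Fin.sum_univ_succ (n := n + 1)]; simp [Y, q]
  have hterm : ∀ k : Fin (n + 2) → ℕ, (Nat.multinomial Finset.univ k : ℤ[X]) *
      ∏ i, (C (Y i) * X ^ (q i)) ^ k i =
      C ((Nat.multinomial Finset.univ k : ℤ) * ∏ i, Y i ^ k i) * X ^ (∑ i, q i * k i) := by
    intro k
    simp only [mul_pow, Finset.prod_mul_distrib, ← pow_mul, Finset.prod_pow_eq_pow_sum, map_mul,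
      map_prod, map_pow, ← mul_assoc]
    simp
  -- the only multinomial term with the right exponent
  let k₀ : Fin (n + 2) → ℕ := Fin.cons (δ - ∑ i, m i) m
  have hk₀ : ∑ i, k₀ i = δ := by rw [Fin.sum_univ_succ]; simp [k₀]; omega
  have hq : ∀ k : Fin (n + 2) → ℕ, ∑ i, q i * k i = ∑ i : Fin (n + 1), k i.succ * (δ + 1) ^ (i : ℕ) := by
    intro k
    rw [Fin.sum_univ_succ]; simp [q, mul_comm]
  rw [hF, Finset.sum_pow_eq_sum_piAntidiag, Polynomial.finsetSum_coeff]
  simp only [hterm, coeff_C_mul_X_pow]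
  rw [Finset.sum_eq_single k₀]
  · rw [if_pos (by rw [hq]; simp [k₀])]
    have hs := Nat.multinomial_spec Finset.univ k₀
    rw [hk₀] at hs
    rw [← hs, Fin.prod_univ_succ (n := n + 1), Fin.prod_univ_succ (n := n + 1)]
    simp only [k₀, Y, Fin.cons_zero, Fin.cons_succ, one_pow]
    push_cast
    ring
  · intro k hk hne
    rw [Finset.mem_piAntidiag] at hk
    rw [if_neg]
    intro h
    apply hne
    rw [hq] at h
    have hle : ∀ i, k i < δ + 1 := fun i =>
      Nat.lt_succ_of_le (hk.1 ▸ Finset.single_le_sum (fun _ _ => Nat.zero_le _) (Finset.mem_univ i))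
    have hlm : ∀ i, m i < δ + 1 := fun i => Nat.lt_succ_of_le
      (le_trans (Finset.single_le_sum (f := m) (fun _ _ => Nat.zero_le _) (Finset.mem_univ i)) hm)
    have h2 := digits_unique (δ + 1) (n + 1) _ _ hlm (fun i => hle i.succ) h
    have h3 := hk.1
    rw [Fin.sum_univ_succ] at h3
    have h4 : ∑ i : Fin (n + 1), k i.succ = ∑ i, m i := by rw [h2]
    funext i
    refine Fin.cases ?_ (fun j => ?_) i
    · simp only [k₀, Fin.cons_zero]; omega
    · simp only [k₀, Fin.cons_succ]; rw [h2]
  · intro h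
    exact absurd (Finset.mem_piAntidiag.mpr ⟨hk₀, fun _ _ => Finset.mem_univ _⟩) h

open Polynomial in
/-- A value of `P`, up to the factor `δ!`, is one coefficient of a product of a power of
`1 + ∑ y j X ^ ((δ + 1) ^ j)` with a polynomial that depends only on `P`. -/
theorem alg_coding (n δ : ℕ) (P : MvPolynomial (Fin (n + 1)) ℤ) (hδ : P.totalDegree ≤ δ) :
    ∃ (D : ℤ[X]) (N₀ : ℕ), ∀ y : Fin (n + 1) → ℤ,
      ((1 + ∑ j : Fin (n + 1), C (y j) * X ^ ((δ + 1) ^ (j : ℕ))) ^ δ * D : ℤ[X]).coeff N₀ =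
      δ.factorial * MvPolynomial.eval y P := by
  let E : (Fin (n + 1) →₀ ℕ) → ℕ := fun m => ∑ i, m i * (δ + 1) ^ (i : ℕ)
  let N₀ : ℕ := ∑ m ∈ P.support, E m
  refine ⟨∑ m ∈ P.support, C (P.coeff m * ((∏ i, ((m i).factorial : ℤ)) * (δ - ∑ i, m i).factorial)) *
    X ^ (N₀ - E m), N₀, fun y => ?_⟩
  rw [MvPolynomial.eval_eq', Finset.mul_sum, Finset.mul_sum, Polynomial.finsetSum_coeff]
  apply Finset.sum_congr rfl
  intro m hm
  have hle : E m ≤ N₀ := Finset.single_le_sum (f := E) (fun _ _ => Nat.zero_le _) hm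
  have hdeg : ∑ i, m i ≤ δ := by
    refine le_trans (le_of_eq ?_) (le_trans (MvPolynomial.le_totalDegree hm) hδ)
    rw [Finsupp.sum_fintype _ _ (fun _ => rfl)]
  have h := coeff_monomial_coding n δ m hdeg y
  rw [mul_left_comm, coeff_C_mul]
  nth_rewrite 2 [show N₀ = E m + (N₀ - E m) by omega]
  rw [coeff_mul_X_pow]
  rw [Nat.cast_prod] at h
  rw [show E m = ∑ i, m i * (δ + 1) ^ (i : ℕ) from rfl]
  linear_combination P.coeff m * h

/-! ### Digits and masks in a base that is a power of two -/

theorem digit_sum_lt {B : ℕ} (d : ℕ → ℕ) (hd : ∀ j, d j < B) (L : ℕ) :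
    ∑ j ∈ Finset.range L, d j * B ^ j < B ^ L := by
  induction L with
  | zero => simp
  | succ L ih =>
    rw [Finset.sum_range_succ, pow_succ]
    have := Nat.mul_le_mul_right (B ^ L) (Nat.succ_le_of_lt (hd L))
    rw [Nat.succ_mul] at this
    rw [mul_comm (B ^ L)]
    omega

theorem digit_sum_eq (B g : ℕ) (L : ℕ) :
    ∑ j ∈ Finset.range L, (g / B ^ j % B) * B ^ j = g % B ^ L := by
  induction L with
  | zero => simp [Nat.mod_one]
  | succ L ih => rw [Finset.sum_range_succ, ih, Nat.mod_pow_succ, mul_comm (B ^ L)]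

theorem land_digits {k : ℕ} (d m : ℕ → ℕ) (hd : ∀ j, d j < 2 ^ k) (hm : ∀ j, m j < 2 ^ k) (L : ℕ) :
    (∑ j ∈ Finset.range L, d j * (2 ^ k) ^ j) &&& (∑ j ∈ Finset.range L, m j * (2 ^ k) ^ j) = 0 ↔
      ∀ j < L, d j &&& m j = 0 := by
  induction L with
  | zero => simp
  | succ L ih =>
    have h1 := digit_sum_lt d hd L
    have h2 := digit_sum_lt m hm L
    rw [← pow_mul] at h1 h2
    rw [Finset.sum_range_succ, Finset.sum_range_succ, mul_comm (d L), mul_comm (m L),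
      ← pow_mul 2 k L, land_eq_zero_block _ _ h1 h2, ih]
    constructor
    · rintro ⟨h3, h4⟩ j hj
      rcases Nat.lt_succ_iff_lt_or_eq.mp hj with h | rfl
      · exact h3 j h
      · exact h4
    · intro h
      exact ⟨fun j hj => h j (by omega), h L (by omega)⟩

theorem land_high_mask {k s d : ℕ} (hs : s ≤ k) (hd : d < 2 ^ k) :
    d &&& (2 ^ k - 2 ^ s) = 0 ↔ d < 2 ^ s := by
  have h0 : 0 < 2 ^ s := by positivity
  have e : 2 ^ k - 2 ^ s = 0 + 2 ^ s * (2 ^ (k - s) - 1) := by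
    rw [Nat.mul_sub, ← pow_add, Nat.add_sub_cancel' hs]; simp
  have h1 : d / 2 ^ s < 2 ^ (k - s) := by
    rw [Nat.div_lt_iff_lt_mul h0, ← pow_add]
    rwa [Nat.sub_add_cancel hs]
  have := land_eq_zero_block (k := s) (x := d % 2 ^ s) (x' := 0) (d / 2 ^ s) (2 ^ (k - s) - 1)
    (Nat.mod_lt _ h0) h0
  rw [e]
  rw [Nat.mod_add_div] at this
  rw [this, Nat.and_two_pow_sub_one_eq_mod, Nat.mod_eq_of_lt h1, Nat.div_eq_zero_iff]
  simp

/-- A sum over the first `L` digits whose nonzero digits are at the positions `p i`. -/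
theorem sum_positions {n L B : ℕ} (p : Fin n → ℕ) (hp : p.Injective) (hL : ∀ i, p i < L) (w : ℕ → ℕ)
    (hw : ∀ j, (¬ ∃ i, p i = j) → w j = 0) :
    ∑ j ∈ Finset.range L, w j * B ^ j = ∑ i, w (p i) * B ^ p i := by
  classical
  rw [← Finset.sum_image (s := Finset.univ) (g := p) (f := fun j => w j * B ^ j) (fun _ _ _ _ h => hp h)]
  symm
  apply Finset.sum_subset
  · intro j hj
    obtain ⟨i, _, rfl⟩ := Finset.mem_image.mp hj
    exact Finset.mem_range.mpr (hL i)
  · intro j _ hj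
    rw [hw j (fun ⟨i, hi⟩ => hj (Finset.mem_image.mpr ⟨i, Finset.mem_univ _, hi⟩)), zero_mul]

open Classical in
/-- The number with `L` digits in base `B` that has the digit `B - β` at the positions `p i` and `B - 1`
elsewhere. -/
noncomputable def maskM {n : ℕ} (p : Fin n → ℕ) (L B β : ℕ) : ℕ :=
  ∑ j ∈ Finset.range L, (if ∃ i, p i = j then B - β else B - 1) * B ^ j

theorem maskM_lt {n : ℕ} (p : Fin n → ℕ) (L : ℕ) {B β : ℕ} (hβ : 0 < β) (hB : 0 < B) :
    maskM p L B β < B ^ L := by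
  apply digit_sum_lt (B := B) (fun j => _)
  intro j
  split_ifs <;> omega

/-- The numbers whose binary digits are disjoint from the mask are the codes of tuples of numbers
below `2 ^ s`, placed as digits at the positions `p i`. -/
theorem mask_coding {n k s L g : ℕ} (p : Fin n → ℕ) (hp : p.Injective) (hL : ∀ i, p i < L) (hs : s ≤ k)
    (hg : g < (2 ^ k) ^ L) : g &&& maskM p L (2 ^ k) (2 ^ s) = 0 ↔
      ∃ z : Fin n → ℕ, (∀ i, z i < 2 ^ s) ∧ g = ∑ i, z i * (2 ^ k) ^ p i := by
  classical
  have h0 : 0 < 2 ^ s := by positivity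
  have hsk : 2 ^ s ≤ 2 ^ k := Nat.pow_le_pow_right two_pos hs
  have hm : ∀ j, (if ∃ i, p i = j then 2 ^ k - 2 ^ s else 2 ^ k - 1) < 2 ^ k := by
    intro j; split_ifs <;> omega
  have key : ∀ d : ℕ → ℕ, (∀ j, d j < 2 ^ k) →
      ((∑ j ∈ Finset.range L, d j * (2 ^ k) ^ j) &&& maskM p L (2 ^ k) (2 ^ s) = 0 ↔
        ∀ j < L, (if ∃ i, p i = j then d j < 2 ^ s else d j = 0)) := by
    intro d hd
    have := land_digits d _ hd hm L
    unfold maskM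
    convert! this using 3 with j hj
    split_ifs with h
    · exact (land_high_mask hs (hd j)).symm
    · have := land_high_mask (Nat.zero_le k) (hd j)
      rw [pow_zero, Nat.lt_one_iff] at this
      exact this.symm
  constructor
  · intro h
    have e : g = ∑ j ∈ Finset.range L, (g / (2 ^ k) ^ j % 2 ^ k) * (2 ^ k) ^ j := by
      rw [digit_sum_eq, Nat.mod_eq_of_lt hg]
    have hd : ∀ j, g / (2 ^ k) ^ j % 2 ^ k < 2 ^ k := fun j => Nat.mod_lt _ (by positivity)
    rw [e, key _ hd] at h
    refine ⟨fun i => g / (2 ^ k) ^ (p i) % 2 ^ k, fun i => ?_, ?_⟩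
    · have := h (p i) (hL i)
      rwa [if_pos ⟨i, rfl⟩] at this
    · have := sum_positions (L := L) (B := 2 ^ k) p hp hL
        (fun j => if j < L then g / (2 ^ k) ^ j % 2 ^ k else 0) (by
          intro j hj
          split_ifs with hjL
          · have := h j hjL
            rwa [if_neg hj] at this
          · rfl)
      simp only [hL, if_true] at this
      rw [← this]
      nth_rewrite 1 [e]
      apply Finset.sum_congr rfl
      intro j hj
      rw [if_pos (Finset.mem_range.mp hj)]
  · rintro ⟨z, hz, rfl⟩
    have hex : ∀ i, Function.extend p z 0 (p i) = z i := fun i => hp.extend_apply z 0 i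
    have hne : ∀ j, (¬ ∃ i, p i = j) → Function.extend p z 0 j = 0 := fun j hj => by
      rw [Function.extend_apply' _ _ _ hj]; rfl
    have := sum_positions (L := L) (B := 2 ^ k) p hp hL (Function.extend p z 0) hne
    simp only [hex] at this
    rw [← this, key]
    · intro j _
      split_ifs with h
      · obtain ⟨i, rfl⟩ := h
        rw [hex]; exact hz i
      · exact hne j h
    · intro j
      by_cases h : ∃ i, p i = j
      · obtain ⟨i, rfl⟩ := h
        rw [hex]; exact (hz i).trans_le hsk
      · rw [hne j h]; positivity

theorem coded_lt {n L B : ℕ} (p : Fin n → ℕ) (hp : p.Injective) (hL : ∀ i, p i < L) (z : Fin n → ℕ)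
    (hB : 0 < B) (hz : ∀ i, z i < B) : ∑ i, z i * B ^ p i < B ^ L := by
  have hex : ∀ i, Function.extend p z 0 (p i) = z i := fun i => hp.extend_apply z 0 i
  have hne : ∀ j, (¬ ∃ i, p i = j) → Function.extend p z 0 j = 0 := fun j hj => by
    rw [Function.extend_apply' _ _ _ hj]; rfl
  have := sum_positions (L := L) (B := B) p hp hL (Function.extend p z 0) hne
  simp only [hex] at this
  rw [← this]
  apply digit_sum_lt
  intro j
  by_cases h : ∃ i, p i = j
  · obtain ⟨i, rfl⟩ := h
    rw [hex]; exact hz i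
  · rw [hne j h]; exact hB

/-- A positive digit `c < 2 ^ (k + 1)` has no binary digit in common with `2 ^ k - 1` only if it equals
`2 ^ k`; the mask touches only the digit in position `N₀`. -/
theorem middle_digit {k N₀ lo c hi : ℕ} (hlo : lo < (2 ^ (k + 1)) ^ N₀) (hc : c < 2 ^ (k + 1)) (hc0 : 0 < c) :
    (lo + (2 ^ (k + 1)) ^ N₀ * (c + 2 ^ (k + 1) * hi)) &&& ((2 ^ k - 1) * (2 ^ (k + 1)) ^ N₀) = 0 ↔
      c = 2 ^ k := by
  have e : (2 ^ k - 1) * (2 ^ (k + 1)) ^ N₀ = 0 + 2 ^ ((k + 1) * N₀) * ((2 ^ k - 1) + 2 ^ (k + 1) * 0) := by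
    rw [pow_mul]; ring
  have hk : 0 < 2 ^ k := by positivity
  have h2 : 2 ^ (k + 1) = 2 * 2 ^ k := by ring
  rw [← pow_mul] at hlo
  rw [e, ← pow_mul, land_eq_zero_block _ _ hlo (by positivity), land_eq_zero_block _ _ hc (by omega)]
  simp only [Nat.and_zero, true_and, and_true, Nat.and_two_pow_sub_one_eq_mod]
  constructor
  · intro h
    obtain ⟨t, rfl⟩ := Nat.dvd_of_mod_eq_zero h
    have : t < 2 := by
      by_contra! h3
      have := Nat.mul_le_mul_left (2 ^ k) h3
      omega
    interval_cases t <;> omega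
  · rintro rfl
    exact Nat.mod_self _

/-! ### The coded polynomial as a number -/

open Polynomial in
theorem coeff_bound (f : ℕ[X]) (D : ℤ[X]) {M : ℤ} (hM : ∀ j, |D.coeff j| ≤ M) (j : ℕ) :
    |(f.map (Nat.castRingHom ℤ) * D).coeff j| ≤ M * (f.eval 1 : ℕ) := by
  have hM0 : 0 ≤ M := (abs_nonneg _).trans (hM 0)
  rw [coeff_mul]
  calc |∑ x ∈ Finset.HasAntidiagonal.antidiagonal j, (f.map (Nat.castRingHom ℤ)).coeff x.1 * D.coeff x.2|
      ≤ ∑ x ∈ Finset.HasAntidiagonal.antidiagonal j, |(f.map (Nat.castRingHom ℤ)).coeff x.1 * D.coeff x.2| :=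
        Finset.abs_sum_le_sum_abs _ _
    _ ≤ ∑ x ∈ Finset.HasAntidiagonal.antidiagonal j, M * (f.coeff x.1 : ℤ) := by
        apply Finset.sum_le_sum
        intro x _
        rw [abs_mul, coeff_map, mul_comm M]
        simp only [eq_natCast, Nat.abs_cast]
        exact mul_le_mul_of_nonneg_left (hM _) (by positivity)
    _ = M * ∑ x ∈ Finset.HasAntidiagonal.antidiagonal j, (f.coeff x.1 : ℤ) := by rw [Finset.mul_sum]
    _ ≤ _ := by
        apply mul_le_mul_of_nonneg_left _ hM0
        rw [Finset.Nat.sum_antidiagonal_eq_sum_range_succ_mk]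
        rw [eval_eq_sum_range' (n := j + 1 + (f.natDegree + 1)) (by omega)]
        push_cast
        simp only [one_pow, mul_one]
        exact Finset.sum_le_sum_of_subset_of_nonneg (Finset.range_mono (by omega))
          (fun _ _ _ => by positivity)

open Polynomial in
theorem eval_bound (D : ℤ[X]) {M B : ℤ} (hM : ∑ j ∈ Finset.range (D.natDegree + 1), |D.coeff j| ≤ M)
    (hB : 1 ≤ B) : |D.eval B| ≤ M * B ^ D.natDegree := by
  rw [eval_eq_sum_range]
  calc |∑ i ∈ Finset.range (D.natDegree + 1), D.coeff i * B ^ i|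
      ≤ ∑ i ∈ Finset.range (D.natDegree + 1), |D.coeff i * B ^ i| := Finset.abs_sum_le_sum_abs _ _
    _ ≤ ∑ i ∈ Finset.range (D.natDegree + 1), |D.coeff i| * B ^ D.natDegree := by
        apply Finset.sum_le_sum
        intro i hi
        rw [abs_mul, abs_of_nonneg (by positivity : (0 : ℤ) ≤ B ^ i)]
        apply mul_le_mul_of_nonneg_left _ (abs_nonneg _)
        apply pow_le_pow_right₀ hB
        exact Nat.lt_succ_iff.mp (Finset.mem_range.mp hi)
    _ ≤ _ := by rw [← Finset.sum_mul]; gcongr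

open Polynomial in
/-- The value at `2 h` of the polynomial of `alg_coding`, for a code `g` of the unknowns. The coefficients
of index at most `L` are shifted by `h`, so that they become positive digits in base `2 h`, and the power
`(2 h) ^ H` makes the number positive even if `g` is not a code. The coefficient of index `N₀` vanishes
exactly when the corresponding digit is `h`. -/
def codeK (δ : ℕ) (D : ℤ[X]) (L H : ℕ) (h a g : ℤ) : ℤ :=
  (1 + a * (2 * h) + g) ^ δ * D.eval (2 * h) + h * ∑ j ∈ Finset.range (L + 1), (2 * h) ^ j + (2 * h) ^ H

open Polynomial in
/-- The bounds hold for every `g` with at most `L'` digits, whether or not it is a code. -/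
theorem codeK_bounds {δ : ℕ} {D : ℤ[X]} {L L' H : ℕ} {h a g : ℕ}
    (hM : ∑ j ∈ Finset.range (D.natDegree + 1), |D.coeff j| ≤ h) (ha : a < h) (hg : g < (2 * h) ^ L')
    (hH : δ * (L' + 2) + D.natDegree + 1 + L + 1 ≤ H) :
    0 < codeK δ D L H h a g ∧ codeK δ D L H h a g < (2 * h : ℤ) ^ (H + 2) := by
  have h1 : (1 : ℤ) ≤ h := by omega
  have hB : (2 : ℤ) ≤ 2 * h := by omega
  have hBN : 2 ≤ 2 * h := by omega
  have e1 : |(1 + a * (2 * h) + g : ℤ) ^ δ * D.eval (2 * h : ℤ)| < (2 * h : ℤ) ^ H := by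
    have f1 : (1 + a * (2 * h) + g : ℤ) ≤ (2 * h) ^ (L' + 2) := by
      have h2 : 1 + a * (2 * h) + g ≤ (2 * h) ^ (L' + 2) := by
        have : 1 ≤ (2 * h) ^ L' := Nat.one_le_pow _ _ (by omega)
        calc 1 + a * (2 * h) + g ≤ (a * (2 * h)) * 1 + (2 * h) ^ L' := by omega
          _ ≤ (a * (2 * h)) * (2 * h) ^ L' + (2 * h) ^ L' := by gcongr
          _ = (a * (2 * h) + 1) * (2 * h) ^ L' := by ring
          _ ≤ ((2 * h) ^ 2) * (2 * h) ^ L' := by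
              gcongr
              nlinarith
          _ = _ := by ring
      exact_mod_cast h2
    have f2 := eval_bound D hM (B := 2 * h) (by omega)
    rw [abs_mul, abs_of_nonneg (by positivity)]
    calc (1 + a * (2 * h) + g : ℤ) ^ δ * |D.eval (2 * h : ℤ)|
        ≤ ((2 * h : ℤ) ^ (L' + 2)) ^ δ * ((2 * h) * (2 * h) ^ D.natDegree) := by
          gcongr
          refine f2.trans ?_
          gcongr
          omega
      _ = (2 * h) ^ (δ * (L' + 2) + D.natDegree + 1) := by rw [← pow_mul]; ring
      _ < (2 * h : ℤ) ^ H := by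
          apply pow_lt_pow_right₀ <;> omega
  have e2 : ((h : ℤ) * ∑ j ∈ Finset.range (L + 1), (2 * (h : ℤ)) ^ j) < (2 * h : ℤ) ^ H := by
    have h2 := digit_sum_lt (B := 2 * h) (fun _ => h) (by intro j; omega) (L + 1)
    rw [← Finset.mul_sum] at h2
    have h3 : h * ∑ j ∈ Finset.range (L + 1), (2 * h) ^ j < (2 * h) ^ H :=
      h2.trans_le (Nat.pow_le_pow_right (by omega) (by omega))
    exact_mod_cast h3
  have e3 : (0 : ℤ) ≤ (h : ℤ) * ∑ j ∈ Finset.range (L + 1), (2 * (h : ℤ)) ^ j := by positivity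
  have e4 := abs_lt.mp e1
  have e5 : (4 : ℤ) * (2 * h) ^ H ≤ (2 * h : ℤ) ^ (H + 2) := by
    rw [pow_add, mul_comm]
    gcongr
    nlinarith
  have e6 : (0 : ℤ) < (2 * h) ^ H := by positivity
  unfold codeK
  constructor <;> linarith

open Polynomial in
/-- For a code `g` of the tuple `z`, the equation `P (a, z) = 0` amounts to one digit of `codeK` being
equal to `2 ^ k`, which is a condition on disjoint binary digits. -/
theorem codeK_mask {n δ k N₀ L H : ℕ} {D : ℤ[X]} {P : MvPolynomial (Fin (n + 1)) ℤ} (hL0 : N₀ ≤ L) (hH : N₀ < H)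
    (hL : δ * (δ + 1) ^ n + D.natDegree ≤ L)
    (hD : ∀ y : Fin (n + 1) → ℤ,
      ((1 + ∑ j : Fin (n + 1), C (y j) * X ^ ((δ + 1) ^ (j : ℕ))) ^ δ * D : ℤ[X]).coeff N₀ =
      δ.factorial * MvPolynomial.eval y P)
    {a β K : ℕ} {z : Fin n → ℕ} (ha : a < β) (hz : ∀ i, z i < β) {M : ℤ} (hM : ∀ j, |D.coeff j| ≤ M)
    (hk : M * ((n + 2) * β) ^ δ < 2 ^ k)
    (hK : (K : ℤ) = codeK δ D L H (2 ^ k) a (∑ i, z i * (2 ^ (k + 1)) ^ ((δ + 1) ^ ((i : ℕ) + 1)) : ℕ)) :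
    K &&& ((2 ^ k - 1) * (2 ^ (k + 1)) ^ N₀) = 0 ↔
      MvPolynomial.eval (Fin.cons (a : ℤ) (fun i => (z i : ℤ)) : Fin (n + 1) → ℤ) P = 0 := by
  set y : Fin (n + 1) → ℤ := Fin.cons (a : ℤ) (fun i => (z i : ℤ)) with hy
  let yN : Fin (n + 1) → ℕ := Fin.cons a z
  let f : ℕ[X] := 1 + ∑ j : Fin (n + 1), C (yN j) * X ^ ((δ + 1) ^ (j : ℕ))
  have hyN : ∀ j, y j = yN j := by
    intro j; refine Fin.cases ?_ (fun i => ?_) j <;> simp [hy, yN]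
  have hyβ : ∀ j, yN j ≤ β := by
    intro j; refine Fin.cases ?_ (fun i => ?_) j
    · simpa [yN] using ha.le
    · simpa [yN] using (hz i).le
  have hf : f.map (Nat.castRingHom ℤ) = 1 + ∑ j : Fin (n + 1), C (y j) * X ^ ((δ + 1) ^ (j : ℕ)) := by
    simp [f, Polynomial.map_sum, hyN]
  have hfdeg : f.natDegree ≤ (δ + 1) ^ n := by
    refine (natDegree_add_le _ _).trans (max_le (by simp) ?_)
    apply natDegree_sum_le_of_forall_le
    intro j _
    refine (natDegree_C_mul_X_pow_le _ _).trans ?_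
    exact Nat.pow_le_pow_right (by omega) (by omega)
  set E : ℤ[X] := (1 + ∑ j : Fin (n + 1), C (y j) * X ^ ((δ + 1) ^ (j : ℕ))) ^ δ * D with hE
  have hEf : E = (f ^ δ).map (Nat.castRingHom ℤ) * D := by rw [hE, ← hf, Polynomial.map_pow]
  have hEdeg : E.natDegree < L + 1 := by
    rw [hEf]
    refine Nat.lt_succ_of_le ((natDegree_mul_le).trans (le_trans ?_ hL))
    gcongr
    refine natDegree_map_le.trans (natDegree_pow_le.trans ?_)
    gcongr
  have hf1 : f.eval 1 ≤ (n + 2) * β := by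
    have : ∑ j, yN j ≤ (n + 1) * β := by
      refine (Finset.sum_le_card_nsmul _ _ β (fun j _ => hyβ j)).trans ?_
      simp
    have e : f.eval 1 = 1 + ∑ j, yN j := by simp [f, eval_finsetSum]
    rw [e]
    calc 1 + ∑ j, yN j ≤ β + (n + 1) * β := by omega
      _ = _ := by ring
  have hM0 : 0 ≤ M := (abs_nonneg _).trans (hM 0)
  have hcoef : ∀ j, |E.coeff j| < 2 ^ k := by
    intro j
    rw [hEf]
    refine lt_of_le_of_lt (coeff_bound _ D hM j) (lt_of_le_of_lt ?_ hk)
    rw [eval_pow]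
    push_cast
    gcongr
    exact_mod_cast hf1
  have hcoef' := fun j => abs_lt.mp (hcoef j)
  -- the shifted coefficients are the digits of `K`
  let c : ℕ → ℕ := fun j => (E.coeff j + 2 ^ k).toNat
  have hc : ∀ j, (c j : ℤ) = E.coeff j + 2 ^ k := fun j => Int.toNat_of_nonneg (by linarith [(hcoef' j).1])
  have hc0 : ∀ j, 0 < c j := fun j => by zify; rw [hc]; linarith [(hcoef' j).1]
  have hcB : ∀ j, c j < 2 ^ (k + 1) := fun j => by
    zify; rw [hc, pow_succ]; linarith [(hcoef' j).2]
  have hKc : K = ∑ j ∈ Finset.range (L + 1), c j * (2 ^ (k + 1)) ^ j + (2 ^ (k + 1)) ^ H := by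
    zify
    simp only [hc]
    have hB : (2 : ℤ) * 2 ^ k = 2 ^ (k + 1) := by ring
    rw [hK, codeK, hB]
    congr 1
    simp only [add_mul, Finset.sum_add_distrib, ← Finset.mul_sum]
    congr 1
    rw [← eval_eq_sum_range' hEdeg, hE]
    simp only [eval_mul, eval_pow, eval_add, eval_one, eval_finsetSum, eval_C, eval_X]
    rw [Fin.sum_univ_succ]
    simp only [hy, Fin.cons_zero, Fin.cons_succ, Fin.val_zero, pow_zero, pow_one, Fin.val_succ]
    push_cast
    ring
  obtain ⟨t, rfl⟩ := Nat.exists_eq_add_of_le hL0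
  obtain ⟨u, rfl⟩ := Nat.exists_eq_add_of_lt hH
  have hKs : K = ∑ j ∈ Finset.range N₀, c j * (2 ^ (k + 1)) ^ j + (2 ^ (k + 1)) ^ N₀ * (c N₀ +
      2 ^ (k + 1) * (∑ j ∈ Finset.range t, c (N₀ + 1 + j) * (2 ^ (k + 1)) ^ j + (2 ^ (k + 1)) ^ u)) := by
    rw [hKc, show N₀ + t + 1 = N₀ + 1 + t by ring, Finset.sum_range_add, Finset.sum_range_succ]
    simp only [mul_add, Finset.mul_sum]
    rw [add_assoc, add_assoc]
    congr 1
    congr 1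
    · ring
    congr 1
    · exact Finset.sum_congr rfl fun j _ => by ring
    · ring
  rw [hKs, middle_digit (digit_sum_lt c hcB _) (hcB _) (hc0 _)]
  have hP := hD y
  have : c N₀ = 2 ^ k ↔ E.coeff N₀ = 0 := by
    zify; rw [hc]; constructor <;> intro h <;> linarith
  rw [this, hP]
  have := Nat.factorial_ne_zero δ
  simp [this]

/-! ### Solvability as one divisibility -/

/-- A function of integer assignments that is given by an integer polynomial. It makes it possible to
leave the polynomial itself implicit. -/
def IsPolyFn {σ : Type} (F : (σ → ℤ) → ℤ) : Prop := ∃ Q : MvPolynomial σ ℤ, ∀ v, MvPolynomial.eval v Q = F v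

namespace IsPolyFn
variable {σ : Type} {F G : (σ → ℤ) → ℤ}
theorem const (c : ℤ) : IsPolyFn (fun _ : σ → ℤ => c) := ⟨MvPolynomial.C c, fun v => by simp⟩
theorem var (i : σ) : IsPolyFn (fun v : σ → ℤ => v i) := ⟨MvPolynomial.X i, fun v => by simp⟩
theorem add (hF : IsPolyFn F) (hG : IsPolyFn G) : IsPolyFn (fun v => F v + G v) :=
  let ⟨p, hp⟩ := hF; let ⟨q, hq⟩ := hG; ⟨p + q, fun v => by simp [hp, hq]⟩
theorem sub (hF : IsPolyFn F) (hG : IsPolyFn G) : IsPolyFn (fun v => F v - G v) :=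
  let ⟨p, hp⟩ := hF; let ⟨q, hq⟩ := hG; ⟨p - q, fun v => by simp [hp, hq]⟩
theorem mul (hF : IsPolyFn F) (hG : IsPolyFn G) : IsPolyFn (fun v => F v * G v) :=
  let ⟨p, hp⟩ := hF; let ⟨q, hq⟩ := hG; ⟨p * q, fun v => by simp [hp, hq]⟩
theorem pow (hF : IsPolyFn F) (k : ℕ) : IsPolyFn (fun v => F v ^ k) :=
  let ⟨p, hp⟩ := hF; ⟨p ^ k, fun v => by simp [hp]⟩
theorem sum {ι : Type} (s : Finset ι) {F : ι → (σ → ℤ) → ℤ} (hF : ∀ i, IsPolyFn (F i)) :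
    IsPolyFn (fun v => ∑ i ∈ s, F i v) := by
  choose p hp using hF
  exact ⟨∑ i ∈ s, p i, fun v => by simp [hp]⟩
theorem polyEval (D : Polynomial ℤ) (hF : IsPolyFn F) : IsPolyFn (fun v => D.eval (F v)) := by
  simp only [Polynomial.eval_eq_sum_range]
  exact sum _ fun i => (const _).mul (hF.pow i)
end IsPolyFn

open Classical in
/-- The number to which `mask_iff` is applied, as a polynomial in `a`, `β`, `g`. The base of the code is
`2 h` with `h = 2 ^ e β ^ δ`. The numbers `S` and `T` have two blocks: the condition that `g` is a code is in the
low block, and the condition `P = 0` in the high block. For a power of two `β`, the number `N` is a power of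
two. -/
noncomputable def codeX {n : ℕ} (p : Fin n → ℕ) (δ : ℕ) (D : Polynomial ℤ) (N₀ L L' H r e : ℕ) (a β g : ℤ) : ℤ :=
  let h := 2 ^ e * β ^ δ
  let S := g + (2 * h) ^ L' * codeK δ D L H h a g
  let T := ∑ j ∈ Finset.range L', (if ∃ i, p i = j then 2 * h - β else 2 * h - 1) * (2 * h) ^ j +
    (2 * h) ^ L' * ((h - 1) * (2 * h) ^ N₀)
  let N := (2 * h) ^ r
  (S + T) * N ^ 2 + (N - 1 - S) * N + (N - 1 - T)

theorem codeX_isPolyFn {n : ℕ} (p : Fin n → ℕ) (δ : ℕ) (D : Polynomial ℤ) (N₀ L L' H r e : ℕ)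
    {σ : Type} {a b g : (σ → ℤ) → ℤ} (ha : IsPolyFn a) (hb : IsPolyFn b) (hg : IsPolyFn g) :
    IsPolyFn (fun v => codeX p δ D N₀ L L' H r e (a v) (b v) (g v)) := by
  have hh : IsPolyFn (fun v => 2 ^ e * b v ^ δ) := (IsPolyFn.const _).mul (hb.pow δ)
  have h2 : IsPolyFn (fun v => 2 * (2 ^ e * b v ^ δ)) := (IsPolyFn.const _).mul hh
  have h1 := IsPolyFn.const (σ := σ) 1
  have hK : IsPolyFn (fun v => codeK δ D L H (2 ^ e * b v ^ δ) (a v) (g v)) :=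
    (((((h1.add (ha.mul h2)).add hg).pow δ).mul (h2.polyEval D)).add
      (hh.mul (IsPolyFn.sum _ fun j => h2.pow j))).add (h2.pow H)
  have hS := hg.add ((h2.pow L').mul hK)
  have hM : IsPolyFn (fun v => ∑ j ∈ Finset.range L', (if ∃ i, p i = j then 2 * (2 ^ e * b v ^ δ) - b v
      else 2 * (2 ^ e * b v ^ δ) - 1) * (2 * (2 ^ e * b v ^ δ)) ^ j) := by
    refine IsPolyFn.sum _ fun j => IsPolyFn.mul ?_ (h2.pow j)
    by_cases h : ∃ i, p i = j
    · simp only [h, if_true]; exact h2.sub hb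
    · simp only [h, if_false]; exact h2.sub h1
  have hT := hM.add ((h2.pow L').mul ((hh.sub h1).mul (h2.pow N₀)))
  have hN := h2.pow r
  exact (((hS.add hT).mul (hN.pow 2)).add (((hN.sub h1).sub hS).mul hN)).add ((hN.sub h1).sub hT)

theorem mask_size {N S T : ℕ} (hN : 2 ≤ N) (hS0 : 0 < S) (hS : S < N) (hT : T < N) :
    2 ≤ (S + T) * N ^ 2 + (N - 1 - S) * N + (N - 1 - T) ∧
    (S + T) * N ^ 2 + (N - 1 - S) * N + (N - 1 - T) ≤ N ^ 4 := by
  constructor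
  · have h1 : 1 * 2 ^ 2 ≤ (S + T) * N ^ 2 := Nat.mul_le_mul (by omega) (Nat.pow_le_pow_left hN 2)
    omega
  · have h1 : (S + T) * N ^ 2 ≤ (2 * N - 2) * N ^ 2 := Nat.mul_le_mul_right _ (by omega)
    have h2 : (N - 1 - S) * N ≤ N * N := Nat.mul_le_mul_right _ (by omega)
    have h3 : (2 * N - 2) * N ^ 2 + 2 * N ^ 2 = 2 * N * N ^ 2 := by
      rw [← Nat.add_mul]; congr 1; omega
    have h4 : 2 * N * N ^ 2 ≤ N * N * N ^ 2 := by gcongr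
    have h5 : N ≤ N * N := Nat.le_mul_self N
    have h6 : N * N * N ^ 2 = N ^ 4 := by ring
    have h7 : N * N = N ^ 2 := by ring
    omega

/-- Solvability of `P = 0` in natural numbers below `β`, for `β` a power of two greater than `a`, expressed
by `N² ∣ (2 * X).choose X` with `X` and `N` polynomials in `a`, `β` and one unknown `g`. The bounds on `X` do not
need `β` to be a power of two. -/
theorem coding (n : ℕ) (P : MvPolynomial (Fin (n + 1)) ℤ) : ∃ (e δ L r : ℕ) (Xf : ℤ → ℤ → ℤ → ℤ),
    2 ≤ r ∧ 1 ≤ δ ∧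
    (∀ {σ : Type} {a b g : (σ → ℤ) → ℤ}, IsPolyFn a → IsPolyFn b → IsPolyFn g →
      IsPolyFn (fun v => Xf (a v) (b v) (g v))) ∧
    (∀ a β g : ℕ, a < β → g < (2 * (2 ^ e * β ^ δ)) ^ L → ∃ X : ℕ, (X : ℤ) = Xf a β g ∧ 2 ≤ X ∧
      X ≤ ((2 * (2 ^ e * β ^ δ)) ^ r) ^ 4 ∧ ((∃ s, β = 2 ^ s) →
        ((2 * (2 ^ e * β ^ δ)) ^ r) ^ 2 ∣ (2 * X).choose X → ∃ z : Fin n → ℕ,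
          MvPolynomial.eval (Fin.cons (a : ℤ) (fun i => (z i : ℤ)) : Fin (n + 1) → ℤ) P = 0)) ∧
    (∀ (a s : ℕ) (z : Fin n → ℕ), a < 2 ^ s → (∀ i, z i < 2 ^ s) →
      MvPolynomial.eval (Fin.cons (a : ℤ) (fun i => (z i : ℤ)) : Fin (n + 1) → ℤ) P = 0 →
      ∃ g : ℕ, g < (2 * (2 ^ e * (2 ^ s) ^ δ)) ^ L ∧ ∀ X : ℕ, (X : ℤ) = Xf a (2 ^ s : ℕ) g →
        ((2 * (2 ^ e * (2 ^ s) ^ δ)) ^ r) ^ 2 ∣ (2 * X).choose X) := by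
  obtain ⟨δ, hδ0, hδ⟩ : ∃ δ, 1 ≤ δ ∧ P.totalDegree ≤ δ := ⟨P.totalDegree + 1, by omega, by omega⟩
  obtain ⟨D, N₀, hD⟩ := alg_coding n δ P hδ
  let M : ℕ := ∑ j ∈ Finset.range (D.natDegree + 1), (D.coeff j).natAbs
  have hMs : ∑ j ∈ Finset.range (D.natDegree + 1), |D.coeff j| = (M : ℤ) := by
    simp [M]
  have hMc : ∀ j, |D.coeff j| ≤ (M : ℤ) := by
    intro j
    rw [← hMs]
    by_cases hj : j ≤ D.natDegree
    · exact Finset.single_le_sum (f := fun j => |D.coeff j|) (fun _ _ => abs_nonneg _)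
        (Finset.mem_range.mpr (Nat.lt_succ_of_le hj))
    · rw [Polynomial.coeff_eq_zero_of_natDegree_lt (by omega), abs_zero]
      exact Finset.sum_nonneg fun _ _ => abs_nonneg _
  obtain ⟨e, he⟩ : ∃ e, M * (n + 2) ^ δ < 2 ^ e := ⟨_, Nat.lt_two_pow_self⟩
  let p : Fin n → ℕ := fun i => (δ + 1) ^ ((i : ℕ) + 1)
  have hp : p.Injective := by
    intro i j hij
    have := Nat.pow_right_injective (by omega : 2 ≤ δ + 1) hij
    exact Fin.ext (by omega)
  let L' := (δ + 1) ^ n + 1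
  have hpL : ∀ i, p i < L' := fun i => Nat.lt_succ_of_le (Nat.pow_le_pow_right (by omega) (by omega))
  let L := δ * (δ + 1) ^ n + D.natDegree + N₀
  let H := δ * (L' + 2) + D.natDegree + 1 + L + 1
  let r := L' + (H + 2)
  -- everything about the natural numbers `K`, `S`, `T`, `X`
  have main : ∀ a β g : ℕ, a < β → g < (2 * (2 ^ e * β ^ δ)) ^ L' → ∃ K S T : ℕ,
      (K : ℤ) = codeK δ D L H (2 ^ e * β ^ δ : ℕ) a g ∧
      S = g + (2 * (2 ^ e * β ^ δ)) ^ L' * K ∧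
      T = maskM p L' (2 * (2 ^ e * β ^ δ)) β +
        (2 * (2 ^ e * β ^ δ)) ^ L' * ((2 ^ e * β ^ δ - 1) * (2 * (2 ^ e * β ^ δ)) ^ N₀) ∧
      0 < S ∧ S < (2 * (2 ^ e * β ^ δ)) ^ r ∧ T < (2 * (2 ^ e * β ^ δ)) ^ r ∧
      2 ≤ (2 * (2 ^ e * β ^ δ)) ^ r ∧
      (((S + T) * ((2 * (2 ^ e * β ^ δ)) ^ r) ^ 2 + ((2 * (2 ^ e * β ^ δ)) ^ r - 1 - S) * (2 * (2 ^ e * β ^ δ)) ^ r +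
        ((2 * (2 ^ e * β ^ δ)) ^ r - 1 - T) : ℕ) : ℤ) = codeX p δ D N₀ L L' H r e a β g := by
    intro a β g ha hg
    have hβ : 0 < β := by omega
    have hhβ : β ≤ 2 ^ e * β ^ δ := by
      calc β ≤ β ^ δ := Nat.le_self_pow (by omega) β
        _ ≤ _ := Nat.le_mul_of_pos_left _ (by positivity)
    have hhe : 2 ^ e ≤ 2 ^ e * β ^ δ := Nat.le_mul_of_pos_right _ (by positivity)
    have hcast : ((2 ^ e * β ^ δ : ℕ) : ℤ) = 2 ^ e * (β : ℤ) ^ δ := by push_cast; ring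
    generalize hh : 2 ^ e * β ^ δ = h at *
    have hMh : M ≤ h := by
      have : M ≤ M * (n + 2) ^ δ := Nat.le_mul_of_pos_right _ (by positivity)
      omega
    obtain ⟨hK0, hKlt⟩ := codeK_bounds (δ := δ) (D := D) (L := L) (L' := L') (H := H) (h := h) (a := a) (g := g)
      (by rw [hMs]; exact_mod_cast hMh) (by omega) hg le_rfl
    obtain ⟨K, hK⟩ := Int.eq_ofNat_of_zero_le hK0.le
    rw [hK] at hK0 hKlt
    have hK0' : 0 < K := by exact_mod_cast hK0
    have hKlt' : K < (2 * h) ^ (H + 2) := by exact_mod_cast hKlt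
    have hB : 0 < 2 * h := by omega
    have hBL : 0 < (2 * h) ^ L' := by positivity
    have hblock : ∀ x y, x < (2 * h) ^ L' → y < (2 * h) ^ (H + 2) → x + (2 * h) ^ L' * y < (2 * h) ^ r := by
      intro x y hx hy
      have := Nat.mul_le_mul_left ((2 * h) ^ L') (Nat.succ_le_of_lt hy)
      rw [Nat.mul_succ, ← pow_add] at this
      exact lt_of_lt_of_le (by omega) this
    have hS := hblock g K hg hKlt'
    have hT := hblock (maskM p L' (2 * h) β) ((h - 1) * (2 * h) ^ N₀) (maskM_lt p L' hβ hB) (by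
      calc (h - 1) * (2 * h) ^ N₀ < (2 * h) * (2 * h) ^ N₀ := by
            apply Nat.mul_lt_mul_of_pos_right (by omega) (by positivity)
        _ = (2 * h) ^ (N₀ + 1) := by ring
        _ ≤ _ := Nat.pow_le_pow_right hB (by omega))
    refine ⟨K, _, _, hK.symm, rfl, rfl, ?_, hS, hT, ?_, ?_⟩
    · have := Nat.mul_pos hBL hK0'
      omega
    · calc 2 ≤ 2 * h := by omega
        _ ≤ _ := Nat.le_self_pow (by omega) _
    · have hMcast : ((maskM p L' (2 * h) β : ℕ) : ℤ) = ∑ j ∈ Finset.range L',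
          (if ∃ i, p i = j then 2 * (h : ℤ) - β else 2 * h - 1) * (2 * (h : ℤ)) ^ j := by
        unfold maskM
        push_cast
        apply Finset.sum_congr rfl
        intro j _
        congr 1
        split_ifs
        · rw [Nat.cast_sub (by omega)]; push_cast; ring
        · rw [Nat.cast_sub (by omega)]; push_cast; ring
      have hcX : codeX p δ D N₀ L L' H r e a β g =
          ((g + (2 * h) ^ L' * K) + (maskM p L' (2 * h) β + (2 * h) ^ L' * ((h - 1) * (2 * h) ^ N₀))) *
            ((2 * h) ^ r) ^ 2 + ((2 * h) ^ r - 1 - (g + (2 * h) ^ L' * K)) * (2 * h) ^ r +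
            ((2 * h) ^ r - 1 - (maskM p L' (2 * h) β + (2 * h) ^ L' * ((h - 1) * (2 * h) ^ N₀)) : ℤ) := by
        rw [hMcast, codeX]
        simp only [← hcast]
        rw [hK]
      rw [hcX]
      rw [Nat.cast_add, Nat.cast_add, Nat.cast_mul, Nat.cast_mul, Nat.cast_sub (by omega), Nat.cast_sub (by omega),
        Nat.cast_sub (by omega), Nat.cast_sub (by omega)]
      push_cast [Nat.cast_sub (show 1 ≤ h by omega)]
      ring
  -- the meaning of the masking condition
  have mean : ∀ a s g K S T : ℕ, a < 2 ^ s → g < (2 * (2 ^ e * (2 ^ s) ^ δ)) ^ L' →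
      (K : ℤ) = codeK δ D L H (2 ^ e * (2 ^ s) ^ δ : ℕ) a g →
      S = g + (2 * (2 ^ e * (2 ^ s) ^ δ)) ^ L' * K →
      T = maskM p L' (2 * (2 ^ e * (2 ^ s) ^ δ)) (2 ^ s) +
        (2 * (2 ^ e * (2 ^ s) ^ δ)) ^ L' * ((2 ^ e * (2 ^ s) ^ δ - 1) * (2 * (2 ^ e * (2 ^ s) ^ δ)) ^ N₀) →
      (S &&& T = 0 ↔ ∃ z : Fin n → ℕ, (∀ i, z i < 2 ^ s) ∧ g = ∑ i, z i * (2 * (2 ^ e * (2 ^ s) ^ δ)) ^ p i ∧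
        MvPolynomial.eval (Fin.cons (a : ℤ) (fun i => (z i : ℤ)) : Fin (n + 1) → ℤ) P = 0) := by
    intro a s g K S T ha hg hK hS hT
    have hk : 2 ^ e * (2 ^ s) ^ δ = 2 ^ (e + s * δ) := by rw [← pow_mul, ← pow_add]
    have hhb : (M : ℤ) * ((n + 2) * (2 ^ s : ℕ)) ^ δ < 2 ^ (e + s * δ) := by
      have : M * ((n + 2) * 2 ^ s) ^ δ < 2 ^ (e + s * δ) := by
        rw [mul_pow, ← hk, ← mul_assoc]
        exact Nat.mul_lt_mul_of_pos_right he (by positivity)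
      exact_mod_cast this
    have hsk : s ≤ e + s * δ + 1 := by nlinarith
    have hB : 2 * 2 ^ (e + s * δ) = 2 ^ (e + s * δ + 1) := by ring
    rw [hk] at hg hK hS hT
    rw [hk]
    generalize e + s * δ = k at *
    rw [hB] at hg hS hT ⊢
    have hgp := hg
    have hmp : maskM p L' (2 ^ (k + 1)) (2 ^ s) < (2 ^ (k + 1)) ^ L' :=
      maskM_lt p L' (by positivity) (by positivity)
    rw [← pow_mul] at hgp hmp
    rw [hS, hT]
    have hb := land_eq_zero_block (k := (k + 1) * L') K ((2 ^ k - 1) * (2 ^ (k + 1)) ^ N₀) hgp hmp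
    rw [pow_mul] at hb
    rw [hb, mask_coding p hp hpL hsk hg]
    have hm : ∀ z : Fin n → ℕ, (∀ i, z i < 2 ^ s) → g = ∑ i, z i * (2 ^ (k + 1)) ^ p i →
        (K &&& ((2 ^ k - 1) * (2 ^ (k + 1)) ^ N₀) = 0 ↔
          MvPolynomial.eval (Fin.cons (a : ℤ) (fun i => (z i : ℤ)) : Fin (n + 1) → ℤ) P = 0) := by
      intro z hz hgz
      refine codeK_mask (L := L) (H := H) (by omega) (by omega) (by omega) hD ha hz hMc hhb ?_
      rw [hK, hgz]
      push_cast
      rfl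
    constructor
    · rintro ⟨⟨z, hz, hgz⟩, h⟩
      exact ⟨z, hz, hgz, (hm z hz hgz).mp h⟩
    · rintro ⟨z, hz, hgz, h⟩
      exact ⟨⟨z, hz, hgz⟩, (hm z hz hgz).mpr h⟩
  have hpow : ∀ s, (2 * (2 ^ e * (2 ^ s) ^ δ)) ^ r = 2 ^ ((1 + (e + s * δ)) * r) := by
    intro s
    rw [← pow_mul, ← pow_add, ← pow_succ', ← pow_mul, add_comm 1]
  refine ⟨e, δ, L', r, codeX p δ D N₀ L L' H r e, by omega, hδ0,
    fun ha hb hg => codeX_isPolyFn p δ D N₀ L L' H r e ha hb hg, ?_, ?_⟩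
  · intro a β g ha hg
    obtain ⟨K, S, T, hK, hS, hT, hS0, hSN, hTN, hN, hX⟩ := main a β g ha hg
    obtain ⟨hs1, hs2⟩ := mask_size hN hS0 hSN hTN
    refine ⟨_, hX, hs1, hs2, ?_⟩
    rintro ⟨s, rfl⟩ hdvd
    have hmk := mask_iff (r := (1 + (e + s * δ)) * r) (S := S) (T := T) (by rwa [← hpow]) (by rwa [← hpow])
    rw [← hpow] at hmk
    obtain ⟨z, _, _, h⟩ := (mean a s g K S T ha hg hK hS hT).mp (hmk.mp hdvd)
    exact ⟨z, h⟩
  · intro a s z ha hz hP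
    have hg : ∑ i, z i * (2 * (2 ^ e * (2 ^ s) ^ δ)) ^ p i < (2 * (2 ^ e * (2 ^ s) ^ δ)) ^ L' := by
      apply coded_lt p hp hpL z (by positivity)
      intro i
      refine (hz i).trans_le ?_
      calc 2 ^ s ≤ (2 ^ s) ^ δ := Nat.le_self_pow (by omega) _
        _ ≤ 2 ^ e * (2 ^ s) ^ δ := Nat.le_mul_of_pos_left _ (by positivity)
        _ ≤ _ := by omega
    refine ⟨∑ i, z i * (2 * (2 ^ e * (2 ^ s) ^ δ)) ^ p i, hg, ?_⟩
    intro X hX'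
    obtain ⟨K, S, T, hK, hS, hT, hS0, hSN, hTN, hN, hX⟩ := main a (2 ^ s) _ ha hg
    have hXX := Int.ofNat_inj.mp (hX'.trans hX.symm)
    rw [hXX]
    have hmk := mask_iff (r := (1 + (e + s * δ)) * r) (S := S) (T := T) (by rwa [← hpow]) (by rwa [← hpow])
    rw [← hpow] at hmk
    exact hmk.mpr ((mean a s _ K S T ha hg hK hS hT).mpr ⟨z, hz, rfl, hP⟩)

/-! ### The combined equation -/

section
open Pell

/-- The two squares, the divisibility and the inequality of the Pell conditions combined in one
polynomial. The inequality `0 ≤ m` also contains the conditions `0 ≤ g < G`, through the factor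
`(g + 1) (G - g)`, and `l ≠ 0`, `x ≠ 0`, through the factor `l² x²`. -/
def combined (G Y X Z g h k l q x y u v n : ℤ) : ℤ :=
  let V := 4 * G * Y * (q ^ 2 + 1)
  let a := Z * (l ^ 2 + 1) * (V + 1)
  let c := 2 * Z ^ 2 * (l ^ 2 + 1) ^ 2 * V
  let B := 2 * X + 1
  let C := pC a B h
  let J := X + 1 + k * (c - 1)
  let A₁ := pD a B h * pF a B h x * pI a B h x y
  let A₂ := (c ^ 2 - 1) * J ^ 2 + 1
  let S := 4 * a - 5
  let T := 3 * q * C - 2 * (q ^ 2 - 1)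
  let m := l ^ 2 * x ^ 2 * ((g + 1) * (G - g) * J ^ 2 - 16 * G ^ 2 * (C - l * Y * J) ^ 2) - 1
  let W := A₂ * ((4 * m + 2) * (A₂ * ((2 * u + 1) * (3 * v + 1))) ^ 2 + 1)
  ((S * n + T) ^ 2 - S ^ 2 * (A₁ + (1 + A₁ ^ 2 + W ^ 2) ^ 2 * W)) ^ 2 -
    4 * S ^ 4 * (1 + A₁ ^ 2 + W ^ 2) ^ 2 * (A₁ * W)

/-- Elimination of `u`, `v`, `n`: the square condition on `W` in `relation_combining` unfolds by
`nonneg_and_sq_iff` to the second Pell square and the inequality. -/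
theorem combined_eq_zero_iff {G Y Z : ℕ} (hG : 1 ≤ G) (hY : 1 ≤ Y) (hZ : 1 ≤ Z) (X g h k l q x y : ℤ) {V a c C J : ℤ}
    (hV : V = 4 * G * Y * (q ^ 2 + 1)) (ha : a = Z * (l ^ 2 + 1) * (V + 1))
    (hc : c = 2 * Z ^ 2 * (l ^ 2 + 1) ^ 2 * V) (hC : C = pC a (2 * X + 1) h)
    (hJ : J = X + 1 + k * (c - 1)) :
    (∃ u v n : ℤ, combined G Y X Z g h k l q x y u v n = 0) ↔
    (∃ r, pD a (2 * X + 1) h * pF a (2 * X + 1) h x * pI a (2 * X + 1) h x y = r ^ 2) ∧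
    (∃ r, (c ^ 2 - 1) * J ^ 2 + 1 = r ^ 2) ∧ (4 * a - 5) ∣ 3 * q * C - 2 * (q ^ 2 - 1) ∧
    0 ≤ l ^ 2 * x ^ 2 * ((g + 1) * (G - g) * J ^ 2 - 16 * G ^ 2 * (C - l * Y * J) ^ 2) - 1 := by
  have hGi : (1 : ℤ) ≤ G := by exact_mod_cast hG
  have hYi : (1 : ℤ) ≤ Y := by exact_mod_cast hY
  have hZi : (1 : ℤ) ≤ Z := by exact_mod_cast hZ
  have hV0 : 0 < V := by rw [hV]; positivity
  have hc0 : 0 < c := by rw [hc]; positivity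
  have hA2 : 0 < (c ^ 2 - 1) * J ^ 2 + 1 := by
    have : 0 ≤ c ^ 2 - 1 := by nlinarith
    positivity
  have hS : 4 * a - 5 ≠ 0 := by omega
  simp only [combined]
  rw [← hV, ← ha, ← hc, ← hC, ← hJ]
  have hrc := fun u v : ℤ => relation_combining (S := 4 * a - 5) (T := 3 * q * C - 2 * (q ^ 2 - 1))
    (A := pD a (2 * X + 1) h * pF a (2 * X + 1) h x * pI a (2 * X + 1) h x y)
    (B := ((c ^ 2 - 1) * J ^ 2 + 1) * ((4 * (l ^ 2 * x ^ 2 * ((g + 1) * (G - g) * J ^ 2 -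
      16 * G ^ 2 * (C - l * Y * J) ^ 2) - 1) + 2) *
      (((c ^ 2 - 1) * J ^ 2 + 1) * ((2 * u + 1) * (3 * v + 1))) ^ 2 + 1)) hS
  have hns := nonneg_and_sq_iff (m := l ^ 2 * x ^ 2 * ((g + 1) * (G - g) * J ^ 2 -
      16 * G ^ 2 * (C - l * Y * J) ^ 2) - 1) hA2
  constructor
  · rintro ⟨u, v, hn⟩
    obtain ⟨h1, h2, h3⟩ := (hrc u v).mpr hn
    obtain ⟨h4, h5⟩ := hns.mpr ⟨u, v, h2⟩
    exact ⟨h1, h5, h3, h4⟩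
  · rintro ⟨h1, h5, h3, h4⟩
    obtain ⟨u, v, h2⟩ := hns.mp ⟨h4, h5⟩
    exact ⟨u, v, (hrc u v).mp ⟨h1, h2, h3⟩⟩

/-- The hypothesis on `X` is needed only for those `g` that are natural numbers below `G`. -/
theorem combined_backward {G Y Z : ℕ} (hG : 1 ≤ G) (hY : 16 ≤ Y) (hZ : 1 ≤ Z) {X g h k l q x y u v n : ℤ}
    (hX : ∀ g' : ℕ, g = g' → g' < G → ∃ X' : ℕ, (X' : ℤ) = X ∧ 2 ≤ X' ∧ 100 * X' * Y ≤ Z)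
    (h0 : combined G Y X Z g h k l q x y u v n = 0) :
    ∃ g' X' : ℕ, g = g' ∧ g' < G ∧ (X' : ℤ) = X ∧ q = 2 ^ (2 * X' + 1) ∧ Y ∣ (2 * X').choose X' := by
  obtain ⟨h1, h2, h3, h4⟩ := (combined_eq_zero_iff hG (by omega) hZ X g h k l q x y rfl rfl rfl rfl rfl).mp ⟨u, v, n, h0⟩
  set V : ℤ := 4 * G * Y * (q ^ 2 + 1) with hV
  set a : ℤ := Z * (l ^ 2 + 1) * (V + 1) with ha
  set c : ℤ := 2 * Z ^ 2 * (l ^ 2 + 1) ^ 2 * V with hc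
  set C := pC a (2 * X + 1) h with hC
  set J := X + 1 + k * (c - 1) with hJ
  have hGi : (1 : ℤ) ≤ G := by exact_mod_cast hG
  have hlx : 0 < l ^ 2 * x ^ 2 * ((g + 1) * (G - g) * J ^ 2 - 16 * G ^ 2 * (C - l * Y * J) ^ 2) := by linarith
  have hl : l ≠ 0 := by rintro h; rw [h] at hlx; simp at hlx
  have hx : x ≠ 0 := by rintro h; rw [h] at hlx; simp at hlx
  have hR : 0 < (g + 1) * (G - g) * J ^ 2 - 16 * G ^ 2 * (C - l * Y * J) ^ 2 :=
    pos_of_mul_pos_right hlx (by positivity)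
  have hgG : 0 < (g + 1) * (G - g) := by
    have h5 : 0 < (g + 1) * (G - g) * J ^ 2 := by
      have : 0 ≤ 16 * (G : ℤ) ^ 2 * (C - l * Y * J) ^ 2 := by positivity
      linarith
    exact pos_of_mul_pos_left h5 (by positivity)
  have hg : 0 ≤ g ∧ g < G := by
    rcases pos_and_pos_or_neg_and_neg_of_mul_pos hgG with ⟨h5, h6⟩ | ⟨h5, h6⟩ <;> constructor <;> omega
  obtain ⟨g', hg'⟩ := Int.eq_ofNat_of_zero_le hg.1
  have hg'G : g' < G := by zify; rw [← hg']; exact hg.2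
  obtain ⟨X', hX', hX2, hXZ⟩ := hX g' hg' hg'G
  refine ⟨g', X', hg', hg'G, hX', ?_⟩
  have hR' : 16 * (C - l * Y * J) ^ 2 < J ^ 2 := by
    have h5 : (g + 1) * (G - g) ≤ (G : ℤ) ^ 2 := by
      rw [sq]; apply mul_le_mul <;> omega
    have h6 : (g + 1) * (G - g) * J ^ 2 ≤ (G : ℤ) ^ 2 * J ^ 2 := by gcongr
    have h7 : (G : ℤ) ^ 2 * (16 * (C - l * Y * J) ^ 2) < (G : ℤ) ^ 2 * J ^ 2 := by linarith
    exact lt_of_mul_lt_mul_left h7 (by positivity)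
  let Ln : ℕ := l.natAbs ^ 2 + 1
  let Qn : ℕ := q.natAbs ^ 2 + 1
  have hLn : (Ln : ℤ) = l ^ 2 + 1 := by simp [Ln]
  have hQn : (Qn : ℤ) = q ^ 2 + 1 := by simp [Qn]
  have hVn : ((4 * G * Y * Qn : ℕ) : ℤ) = V := by push_cast; rw [hQn]
  have han : ((Z * Ln * (4 * G * Y * Qn + 1) : ℕ) : ℤ) = a := by
    rw [ha, ← hVn, ← hLn]; push_cast; ring
  have hcn : ((2 * Z ^ 2 * Ln ^ 2 * (4 * G * Y * Qn) : ℕ) : ℤ) = c := by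
    rw [hc, ← hVn, ← hLn]; push_cast; ring
  have hBn : ((2 * X' + 1 : ℕ) : ℤ) = 2 * X + 1 := by rw [← hX']; push_cast; ring
  exact bridge_backward (G := G) (Y := Y) (X := X') (Z := Z) (h := h) (k := k) (x := x) (y := y) (C := C) (J := J)
    hG hY hX2 hXZ hLn hQn rfl rfl rfl hx hl (by rw [han, hBn]) (by rw [han, hBn]; exact h1)
    (by rw [hcn, hX']) (by rw [hcn]; exact h2) (by rw [han]; exact h3) hR'

theorem combined_forward {G Y X Z g : ℕ} (hg : g < G) (hY : 16 ≤ Y) (hX : 2 ≤ X) (hZ : 100 * X * Y ≤ Z)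
    (hdvd : Y ∣ (2 * X).choose X) :
    ∃ h k l x y u v n : ℤ, combined G Y X Z g h k l (2 ^ (2 * X + 1)) x y u v n = 0 := by
  have hG : 1 ≤ G := by omega
  obtain ⟨l, hl, H⟩ := bridge_forward hG hY hX hZ hdvd
  let Ln : ℕ := l.natAbs ^ 2 + 1
  let Qn : ℕ := (2 ^ (2 * X + 1)) ^ 2 + 1
  have hLn : (Ln : ℤ) = l ^ 2 + 1 := by simp [Ln]
  have hQn : (Qn : ℤ) = (2 ^ (2 * X + 1)) ^ 2 + 1 := by simp [Qn]
  obtain ⟨h, k, x, y, C, J, hx, hC, h1, hJ, h2, h3, h4⟩ := H rfl hLn hQn rfl rfl rfl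
  have hVn : ((4 * G * Y * Qn : ℕ) : ℤ) = 4 * G * Y * ((2 ^ (2 * X + 1)) ^ 2 + 1) := by push_cast; rw [hQn]
  have han : ((Z * Ln * (4 * G * Y * Qn + 1) : ℕ) : ℤ) = Z * (l ^ 2 + 1) * ((4 * G * Y * Qn : ℕ) + 1 : ℤ) := by
    rw [← hLn]; push_cast; ring
  have hcn : ((2 * Z ^ 2 * Ln ^ 2 * (4 * G * Y * Qn) : ℕ) : ℤ) = 2 * Z ^ 2 * (l ^ 2 + 1) ^ 2 * (4 * G * Y * Qn : ℕ) := by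
    rw [← hLn]; push_cast; ring
  have hBn : ((2 * X + 1 : ℕ) : ℤ) = 2 * X + 1 := by push_cast; ring
  rw [hBn] at hC h1
  have hZ1 : 1 ≤ Z := le_trans (by nlinarith) hZ
  obtain ⟨u, v, n, hn⟩ := (combined_eq_zero_iff hG (by omega) hZ1 X g h k l (2 ^ (2 * X + 1)) x y hVn han hcn hC hJ).mpr
    ⟨h1, h2, h3, by
      have h5 : (1 : ℤ) ≤ (g + 1) * (G - g) := by
        have : (1 : ℤ) ≤ G - g := by omega
        nlinarith
      have h6 : 1 * J ^ 2 ≤ (g + 1) * (G - g) * J ^ 2 := by gcongr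
      have h7 : 0 < (g + 1) * (G - g) * J ^ 2 - 16 * G ^ 2 * (C - l * Y * J) ^ 2 := by linarith
      have h8 : 0 < l ^ 2 * x ^ 2 * ((g + 1) * (G - g) * J ^ 2 - 16 * G ^ 2 * (C - l * Y * J) ^ 2) :=
        mul_pos (by positivity) h7
      linarith⟩
  exact ⟨h, k, l, x, y, u, v, n, hn⟩

end

/-! ### Counting the unknowns -/

theorem combined_isPolyFn {σ : Type} {G Y X Z g h k l q x y u v n : (σ → ℤ) → ℤ}
    (hG : IsPolyFn G) (hY : IsPolyFn Y) (hX : IsPolyFn X) (hZ : IsPolyFn Z) (hg : IsPolyFn g)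
    (hh : IsPolyFn h) (hk : IsPolyFn k) (hl : IsPolyFn l) (hq : IsPolyFn q) (hx : IsPolyFn x)
    (hy : IsPolyFn y) (hu : IsPolyFn u) (hv : IsPolyFn v) (hn : IsPolyFn n) :
    IsPolyFn (fun t => combined (G t) (Y t) (X t) (Z t) (g t) (h t) (k t) (l t) (q t) (x t) (y t)
      (u t) (v t) (n t)) := by
  have h1 (m : ℤ) := IsPolyFn.const (σ := σ) m
  have hV := (((h1 4).mul hG).mul hY).mul ((hq.pow 2).add (h1 1))
  have ha := (hZ.mul ((hl.pow 2).add (h1 1))).mul (hV.add (h1 1))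
  have hc := (((h1 2).mul (hZ.pow 2)).mul (((hl.pow 2).add (h1 1)).pow 2)).mul hV
  have hB := ((h1 2).mul hX).add (h1 1)
  have hC := hB.add ((ha.sub (h1 1)).mul hh)
  have hJ := (hX.add (h1 1)).add (hk.mul (hc.sub (h1 1)))
  have hD := (((ha.pow 2).sub (h1 1)).mul (hC.pow 2)).add (h1 1)
  have hE := (((h1 2).mul (hC.pow 2)).mul hD).mul hx
  have hF := (((ha.pow 2).sub (h1 1)).mul (hE.pow 2)).add (h1 1)
  have hGG := ha.add (hF.mul (((h1 1).sub ha).add (ha.mul (hE.pow 2))))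
  have hH := hC.add (hF.mul ((hB.sub hC).add (((h1 2).mul hC).mul hy)))
  have hI := (((hGG.pow 2).sub (h1 1)).mul (hH.pow 2)).add (h1 1)
  have hA1 := (hD.mul hF).mul hI
  have hA2 := (((hc.pow 2).sub (h1 1)).mul (hJ.pow 2)).add (h1 1)
  have hS := ((h1 4).mul ha).sub (h1 5)
  have hT := (((h1 3).mul hq).mul hC).sub ((h1 2).mul ((hq.pow 2).sub (h1 1)))
  have hm := (((hl.pow 2).mul (hx.pow 2)).mul
    ((((hg.add (h1 1)).mul (hG.sub hg)).mul (hJ.pow 2)).sub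
      (((h1 16).mul (hG.pow 2)).mul ((hC.sub ((hl.mul hY).mul hJ)).pow 2)))).sub (h1 1)
  have hW := hA2.mul (((((h1 4).mul hm).add (h1 2)).mul
    ((hA2.mul ((((h1 2).mul hu).add (h1 1)).mul (((h1 3).mul hv).add (h1 1)))).pow 2)).add (h1 1))
  have hR := ((h1 1).add (hA1.pow 2)).add (hW.pow 2)
  have := (((((hS.mul hn).add hT).pow 2).sub ((hS.pow 2).mul (hA1.add ((hR.pow 2).mul hW)))).pow 2).sub
    ((((h1 4).mul (hS.pow 4)).mul (hR.pow 2)).mul (hA1.mul hW))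
  exact this

/-- By Euler's theorem modulo `2 a + 3`, the numbers `(2 a + 3) (2 f + 1) + 1` include arbitrarily large
powers of two. Their absolute value is at least `2 a + 2` for every integer `f`, so no unknown has to be
spent on a condition `b > a`. -/
theorem exists_two_pow_param (a t : ℕ) : ∃ s f : ℕ, t ≤ s ∧ 1 ≤ s ∧
    (2 * (a : ℤ) + 4 + (4 * a + 6) * f) = 2 ^ s := by
  have hco : Nat.Coprime 2 (2 * a + 3) := by
    rw [Nat.coprime_two_left]; exact ⟨a + 1, by ring⟩
  have hpos : 0 < Nat.totient (2 * a + 3) := Nat.totient_pos.mpr (by omega)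
  refine ⟨Nat.totient (2 * a + 3) * (t + 1), ?_⟩
  have hs : t + 1 ≤ Nat.totient (2 * a + 3) * (t + 1) := Nat.le_mul_of_pos_left _ hpos
  have h1 : 2 ^ (Nat.totient (2 * a + 3) * (t + 1)) ≡ 1 [MOD 2 * a + 3] := by
    rw [pow_mul]
    simpa using (Nat.ModEq.pow_totient hco).pow (t + 1)
  obtain ⟨s, hs'⟩ : ∃ s, Nat.totient (2 * a + 3) * (t + 1) = s + 1 := ⟨_, (Nat.sub_add_cancel (by omega)).symm⟩
  rw [hs'] at h1 hs ⊢
  obtain ⟨m, hm⟩ := (Nat.modEq_iff_dvd' (Nat.one_le_two_pow)).mp h1.symm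
  have hp : 1 ≤ 2 ^ s := Nat.one_le_two_pow
  have hmo : Odd ((2 * a + 3) * m) := ⟨2 ^ s - 1, by rw [← hm, pow_succ]; omega⟩
  obtain ⟨f, rfl⟩ := (Nat.odd_mul.mp hmo).2
  refine ⟨f, by omega, by omega, ?_⟩
  have : 2 ^ (s + 1) = (2 * a + 3) * (2 * f + 1) + 1 := by rw [← hm]; rw [pow_succ]; omega
  have : (2 : ℤ) ^ (s + 1) = (2 * a + 3) * (2 * f + 1) + 1 := by exact_mod_cast this
  rw [this]; ring

/-- Eleven unknowns suffice for solvability in natural numbers. They are, in this order,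
`f, g, h, k, l, w, x, y, u, v, n`, where `b = (2 a + 3) (2 f + 1) + 1`, `β = b²`, and `q = b w`. Since
`q = 2 ^ (2 X + 1)`, the number `b` divides a power of two, and therefore `β` is a power of two. -/
theorem natural_unknowns (n : ℕ) (P : MvPolynomial (Fin (n + 1)) ℤ) :
    ∃ Q : MvPolynomial (Fin 12) ℤ, ∀ a : ℕ,
      (∃ z : Fin n → ℕ, MvPolynomial.eval (Fin.cons (a : ℤ) (fun i => (z i : ℤ)) : Fin (n + 1) → ℤ) P = 0) ↔
      (∃ z : Fin 11 → ℤ, MvPolynomial.eval (Fin.cons (a : ℤ) z : Fin 12 → ℤ) Q = 0) := by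
  obtain ⟨e, δ, L, r, Xf, hr, hδ, hXf, hbwd, hfwd⟩ := coding n P
  let b : (Fin 12 → ℤ) → ℤ := fun v => 2 * v 0 + 4 + (4 * v 0 + 6) * v 1
  let B : (Fin 12 → ℤ) → ℤ := fun v => 2 * (2 ^ e * (b v ^ 2) ^ δ)
  have hv (i : Fin 12) := IsPolyFn.var i
  have h1 (m : ℤ) := IsPolyFn.const (σ := Fin 12) m
  have hb : IsPolyFn b := (((h1 2).mul (hv 0)).add (h1 4)).add ((((h1 4).mul (hv 0)).add (h1 6)).mul (hv 1))
  have hB : IsPolyFn B := (h1 2).mul ((h1 (2 ^ e)).mul ((hb.pow 2).pow δ))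
  obtain ⟨Q, hQ⟩ := combined_isPolyFn (hB.pow L) ((hB.pow r).pow 2) (hXf (hv 0) (hb.pow 2) (hv 2))
    ((h1 100).mul ((hB.pow r).pow 6)) (hv 2) (hv 3) (hv 4) (hv 5) (hb.mul (hv 6)) (hv 7) (hv 8)
    (hv 9) (hv 10) (hv 11)
  beta_reduce at hQ
  have hNbound : ∀ β : ℕ, 4 ≤ β → 1 ≤ 2 * (2 ^ e * β ^ δ) ∧ β ≤ (2 * (2 ^ e * β ^ δ)) ^ r ∧
      16 ≤ ((2 * (2 ^ e * β ^ δ)) ^ r) ^ 2 := by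
    intro β hβ
    have h2 : β ≤ 2 * (2 ^ e * β ^ δ) := by
      have h3 : β ≤ β ^ δ := Nat.le_self_pow (by omega) β
      have h4 : β ^ δ ≤ 2 ^ e * β ^ δ := Nat.le_mul_of_pos_left _ (by positivity)
      omega
    have h5 : β ≤ (2 * (2 ^ e * β ^ δ)) ^ r := h2.trans (Nat.le_self_pow (by omega) _)
    exact ⟨by omega, h5, by nlinarith⟩
  have hZbound : ∀ N X : ℕ, X ≤ N ^ 4 → 100 * X * N ^ 2 ≤ 100 * N ^ 6 := by
    intro N X h
    calc 100 * X * N ^ 2 ≤ 100 * N ^ 4 * N ^ 2 := by gcongr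
      _ = _ := by ring
  refine ⟨Q, fun a => ⟨?_, ?_⟩⟩
  · rintro ⟨z, hz⟩
    obtain ⟨t, hta, htz⟩ : ∃ t, a < 2 ^ t ∧ ∀ i, z i < 2 ^ t := by
      refine ⟨a + ∑ i, z i, ?_, fun i => ?_⟩
      · exact lt_of_le_of_lt (by omega) Nat.lt_two_pow_self
      · have := Finset.single_le_sum (f := z) (fun _ _ => Nat.zero_le _) (Finset.mem_univ i)
        exact lt_of_le_of_lt (by omega) Nat.lt_two_pow_self
    obtain ⟨s, f, hts, hs1, hf⟩ := exists_two_pow_param a t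
    have hts2 : 2 ^ t ≤ 2 ^ (2 * s) := Nat.pow_le_pow_right (by norm_num) (by omega)
    obtain ⟨g, hg, hgX⟩ := hfwd a (2 * s) z (by omega) (fun i => (htz i).trans_le hts2) hz
    have hβ4 : 4 ≤ 2 ^ (2 * s) := by
      calc 4 = 2 ^ (2 * 1) := by norm_num
        _ ≤ _ := Nat.pow_le_pow_right (by norm_num) (by omega)
    obtain ⟨hB1, hN1, hN2⟩ := hNbound _ hβ4
    obtain ⟨X, hX, hX2, hXN, -⟩ := hbwd a (2 ^ (2 * s)) g (by omega) hg
    have hdvd := hgX X hX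
    obtain ⟨h, k, l, x, y, u, v, n', h0⟩ := combined_forward (Z := 100 * ((2 * (2 ^ e * (2 ^ (2 * s)) ^ δ)) ^ r) ^ 6)
      hg hN2 hX2 (hZbound _ _ hXN) hdvd
    -- the power of two `2 ^ s` has to divide `q = 2 ^ (2 X + 1)`
    have hsX : s ≤ X := by
      have h5 := Nat.le_of_dvd (Nat.choose_pos (by omega)) hdvd
      have h6 : (2 * X).choose X ≤ 2 ^ (2 * X) := Nat.choose_le_two_pow _ _
      have h7 : 2 ^ (2 * s) ≤ 2 ^ (2 * X) := hN1.trans ((Nat.le_self_pow two_ne_zero _).trans (h5.trans h6))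
      have := (Nat.pow_le_pow_iff_right (by norm_num)).mp h7
      omega
    refine ⟨![f, g, h, k, l, 2 ^ (2 * X + 1 - s), x, y, u, v, n'], ?_⟩
    rw [hQ]
    have hbv : b (Fin.cons (a : ℤ) ![(f : ℤ), g, h, k, l, 2 ^ (2 * X + 1 - s), x, y, u, v, n']) = 2 ^ s := hf
    have hBv : B (Fin.cons (a : ℤ) ![(f : ℤ), g, h, k, l, 2 ^ (2 * X + 1 - s), x, y, u, v, n']) =
        ((2 * (2 ^ e * (2 ^ (2 * s)) ^ δ) : ℕ) : ℤ) := by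
      simp only [B, hbv]
      push_cast
      rw [← pow_mul 2 s 2, mul_comm s 2]
    rw [hBv, hbv]
    have hq : (2 : ℤ) ^ s * 2 ^ (2 * X + 1 - s) = 2 ^ (2 * X + 1) := by
      rw [← pow_add]; congr 1; omega
    have hXv : Xf a ((2 ^ s) ^ 2) g = X := by
      rw [hX, ← pow_mul, mul_comm s 2]; push_cast; rfl
    have h0' := h0
    push_cast at h0'
    rw [← hXv, ← hq] at h0'
    push_cast
    exact h0'
  · rintro ⟨z, hz⟩
    rw [hQ] at hz
    set v : Fin 12 → ℤ := Fin.cons (a : ℤ) z with hvdef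
    have hv0 : v 0 = a := rfl
    have hbabs : 2 * a + 2 ≤ (b v).natAbs := by
      have : b v = (2 * a + 3) * (2 * v 1 + 1) + 1 := by simp only [b, hv0]; ring
      rcases le_or_gt 0 (v 1) with h | h
      · have h2 : (2 * (a : ℤ) + 3) * 1 ≤ (2 * a + 3) * (2 * v 1 + 1) := by gcongr; omega
        omega
      · have h2 : (2 * (a : ℤ) + 3) * (2 * v 1 + 1) ≤ (2 * a + 3) * (-1) := by gcongr; omega
        omega
    obtain ⟨c, hc⟩ : ∃ c, (b v).natAbs = c := ⟨_, rfl⟩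
    rw [hc] at hbabs
    have hbv : b v ^ 2 = ((c ^ 2 : ℕ) : ℤ) := by rw [← hc]; push_cast; rw [sq_abs]
    have hBv : B v = ((2 * (2 ^ e * (c ^ 2) ^ δ) : ℕ) : ℤ) := by
      simp only [B, hbv]; push_cast; ring
    have hβa : a < c ^ 2 := by nlinarith
    have hβ4 : 4 ≤ c ^ 2 := by nlinarith
    have hc0 : 0 < c := by omega
    obtain ⟨hB1, hN1, hN2⟩ := hNbound _ hβ4
    rw [hBv, hbv, hv0] at hz
    have hXok : ∀ g' : ℕ, v 2 = g' → g' < (2 * (2 ^ e * (c ^ 2) ^ δ)) ^ L → ∃ X' : ℕ,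
        (X' : ℤ) = Xf a (c ^ 2 : ℕ) (v 2) ∧ 2 ≤ X' ∧
        100 * X' * ((2 * (2 ^ e * (c ^ 2) ^ δ)) ^ r) ^ 2 ≤ 100 * ((2 * (2 ^ e * (c ^ 2) ^ δ)) ^ r) ^ 6 := by
      intro g' hg' hgG'
      obtain ⟨X', hX', h2, h3, -⟩ := hbwd a (c ^ 2) g' hβa hgG'
      exact ⟨X', by rw [hX', hg'], h2, hZbound _ _ h3⟩
    obtain ⟨g, X, hg, hgG, hX, hq, hdvd⟩ := combined_backward
      (G := (2 * (2 ^ e * (c ^ 2) ^ δ)) ^ L) (Y := ((2 * (2 ^ e * (c ^ 2) ^ δ)) ^ r) ^ 2)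
      (Z := 100 * ((2 * (2 ^ e * (c ^ 2) ^ δ)) ^ r) ^ 6)
      (X := Xf a (c ^ 2 : ℕ) (v 2)) (g := v 2) (h := v 3) (k := v 4) (l := v 5) (q := b v * v 6)
      (x := v 7) (y := v 8) (u := v 9) (v := v 10) (n := v 11)
      (Nat.one_le_pow _ _ (by omega)) hN2 (Nat.succ_le_of_lt (by positivity)) hXok (by push_cast at hz ⊢; exact hz)
    have hcs : ∃ s, c = 2 ^ s := by
      have h3 : c ∣ 2 ^ (2 * X + 1) := by
        have := Int.natAbs_dvd_natAbs.mpr (Dvd.intro _ hq)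
        rwa [hc, Int.natAbs_pow] at this
      obtain ⟨s, _, hs⟩ := (Nat.dvd_prime_pow Nat.prime_two).mp h3
      exact ⟨s, hs⟩
    obtain ⟨s, hs⟩ := hcs
    obtain ⟨X', hX', -, -, hsol⟩ := hbwd a (c ^ 2) g hβa hgG
    rw [hg] at hX
    have hXX : X = X' := by exact_mod_cast hX.trans hX'.symm
    rw [← hXX] at hsol
    exact hsol ⟨s * 2, by rw [hs, pow_mul]⟩ hdvd

open MvPolynomial

theorem eleven_unknowns_over_Z (ν : ℕ) (P : MvPolynomial (Fin (ν + 1)) ℤ) :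
    ∃ Q : MvPolynomial (Fin 12) ℤ, ∀ a : ℕ,
      (∃ z : Fin ν → ℤ, eval (Fin.cases (a : ℤ) z : Fin (ν + 1) → ℤ) P = 0) ↔
      (∃ z : Fin 11 → ℤ, eval (Fin.cases (a : ℤ) z : Fin 12 → ℤ) Q = 0) := by
  let sub : Fin (ν + 1) → MvPolynomial (Fin (ν + ν + 1)) ℤ :=
    Fin.cases (X 0) (fun i => X (Fin.castAdd ν i).succ - X (Fin.natAdd ν i).succ)
  obtain ⟨Q, hQ⟩ := natural_unknowns (ν + ν) (aeval sub P)
  have key : ∀ (a : ℤ) (z : Fin (ν + ν) → ℤ),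
      eval (Fin.cons a z : Fin (ν + ν + 1) → ℤ) (aeval sub P) =
        eval (Fin.cases a (fun i => z (Fin.castAdd ν i) - z (Fin.natAdd ν i)) : Fin (ν + 1) → ℤ) P := by
    intro a z
    have h2 : (fun i => aeval (Fin.cons a z : Fin (ν + ν + 1) → ℤ) (sub i)) =
        (Fin.cases a (fun i => z (Fin.castAdd ν i) - z (Fin.natAdd ν i)) : Fin (ν + 1) → ℤ) := by
      funext i
      refine Fin.cases ?_ (fun i => ?_) i
      · simp [sub]
      · simp [sub]
    have h1 := comp_aeval_apply (aeval (Fin.cons a z : Fin (ν + ν + 1) → ℤ)) (f := sub) P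
    rw [h2] at h1
    exact (RingHom.congr_fun (coe_aeval_eq_eval _) _).symm.trans
      (h1.trans (RingHom.congr_fun (coe_aeval_eq_eval _) P))
  -- every integer is a difference of two natural numbers
  refine ⟨Q, fun a => Iff.trans ⟨?_, ?_⟩ (hQ a)⟩
  · rintro ⟨z, hz⟩
    refine ⟨Fin.append (fun i => (z i).toNat) (fun i => (-z i).toNat), ?_⟩
    rw [key, ← hz]
    congr 2
    funext i
    refine Fin.cases rfl (fun i => ?_) i
    simp only [Fin.append_left, Fin.append_right, Fin.cases_succ]
    omega
  · rintro ⟨z, hz⟩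
    exact ⟨_, (key a _).symm.trans hz⟩
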